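/- arXiv:2107.04579 — 7 statements merged into one kernel-verified Lean document; each statement's English description precedes it below -/
import Mathlib

section
/- Let b, j and t be integers with 0 < t < q+1. Then Tr(γ^b · γ^{(q−1)j}) = Tr(γ^b · γ^{(q−1)(j+t)}) if and only if (q+1) divides (2j + t − b). -/
/-!
The trace of a quadratic extension is `x ↦ x + x ^ q`. If `s ^ (q + 1) = 1`, then
`s * (x + x ^ q - x * s - (x * s) ^ q) = (1 - s) * (x * s - x ^ q)`, so `x ≠ 0` and `x * s` have
the same trace exactly when `s = 1` or `x ^ (q - 1) = s`. Here `x = γ ^ b * u ^ j` and `s = u ^ t`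
with `u = γ ^ (q - 1)`, so that `u ^ (q + 1) = 1` and `x ^ (q - 1) = u ^ (b - 2 * j)`.
-/

theorem add_pow_eq_mul_add_mul_pow_iff {R : Type*} [CommRing R] [NoZeroDivisors R] {n : ℕ} {s : R}
    (hs : s ^ (n + 1) = 1) (x : R) :
    x + x ^ n = x * s + (x * s) ^ n ↔ s = 1 ∨ x ^ n = x * s := by
  have hunit : IsUnit s := .of_pow_eq_one hs n.succ_ne_zero
  have factor : s * (x + x ^ n - (x * s + (x * s) ^ n)) = (1 - s) * (x * s - x ^ n) := by
    rw [mul_pow]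
    linear_combination -x ^ n * hs
  rw [← sub_eq_zero, ← hunit.mul_right_eq_zero, factor, mul_eq_zero, sub_eq_zero, sub_eq_zero,
    eq_comm (a := 1), eq_comm (a := x * s)]

section Group

variable {G : Type*} [Group G] {g : G} {n : ℕ}

theorem zpow_sub_one_pow_add_one_eq_one (hg : g ^ (n ^ 2) = g) :
    (g ^ ((n : ℤ) - 1)) ^ (n + 1) = 1 := by
  calc (g ^ ((n : ℤ) - 1)) ^ (n + 1) = g ^ (((n ^ 2 : ℕ) : ℤ) - 1) := by
        rw [← zpow_natCast, ← zpow_mul]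
        push_cast
        ring_nf
    _ = 1 := by rw [zpow_sub_one, zpow_natCast, hg, mul_inv_cancel]

theorem zpow_mul_zpow_sub_one_zpow_pow (hg : g ^ (n ^ 2) = g) (b j : ℤ) :
    (g ^ b * (g ^ ((n : ℤ) - 1)) ^ j) ^ n =
      g ^ b * (g ^ ((n : ℤ) - 1)) ^ j * (g ^ ((n : ℤ) - 1)) ^ (b - 2 * j) := by
  have hu : ((g ^ ((n : ℤ) - 1)) ^ (n + 1)) ^ j = 1 := by
    rw [zpow_sub_one_pow_add_one_eq_one hg, one_zpow]
  rw [← mul_one (_ * _ * _), ← hu]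
  simp only [← zpow_natCast, ← zpow_mul, ← zpow_add]
  push_cast
  ring_nf

theorem orderOf_zpow_sub_one (hn : 1 < n) (hg : orderOf g = n ^ 2 - 1) :
    orderOf (g ^ ((n : ℤ) - 1)) = n + 1 := by
  have hfactor : orderOf g = (n + 1) * (n - 1) := by
    rw [hg, ← Nat.sq_sub_sq, one_pow]
  have hcast : (n : ℤ) - 1 = (n - 1 : ℕ) := by omega
  rw [hcast, zpow_natCast, orderOf_pow_of_dvd (by omega) (hfactor ▸ dvd_mul_left _ _), hfactor,
    Nat.mul_div_cancel _ (by omega)]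

end Group

theorem orderOf_zpow_sub_one_of_forall_mem_zpowers {K : Type*} [Field K] [Finite K] {q : ℕ}
    (hK : Nat.card K = q ^ 2) {γ : Kˣ} (hγ : ∀ x : Kˣ, x ∈ Subgroup.zpowers γ) :
    orderOf (γ ^ ((q : ℤ) - 1)) = q + 1 := by
  have hq : 1 < q := (one_lt_pow_iff two_ne_zero).mp (hK ▸ Finite.one_lt_card)
  refine orderOf_zpow_sub_one hq ?_
  rw [orderOf_eq_card_of_forall_mem_zpowers hγ, Nat.card_units, hK]

section QuadraticExtension

variable {F K : Type*} [Field F] [Field K] [Finite K] [Algebra F K]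

theorem finrank_eq_two_of_natCard_eq_sq (h : Nat.card K = Nat.card F ^ 2) :
    Module.finrank F K = 2 := by
  have : Finite F := Finite.of_injective _ (algebraMap F K).injective
  rw [Module.natCard_eq_pow_finrank (K := F)] at h
  exact Nat.pow_right_injective Finite.one_lt_card h

theorem algebraMap_trace_of_finrank_eq_two (h : Module.finrank F K = 2) (x : K) :
    algebraMap F K (Algebra.trace F K x) = x + x ^ Nat.card F := by
  simp [FiniteField.algebraMap_trace_eq_sum_pow, h, Finset.sum_range_succ]

theorem trace_eq_trace_mul_iff (h : Module.finrank F K = 2) {s : K}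
    (hs : s ^ (Nat.card F + 1) = 1) (x : K) :
    Algebra.trace F K x = Algebra.trace F K (x * s) ↔ s = 1 ∨ x ^ Nat.card F = x * s := by
  rw [← (algebraMap F K).injective.eq_iff, algebraMap_trace_of_finrank_eq_two h,
    algebraMap_trace_of_finrank_eq_two h, add_pow_eq_mul_add_mul_pow_iff hs]

theorem trace_eq_iff_dvd_general {q : ℕ} (hF : Nat.card F = q) (hK : Nat.card K = q ^ 2)
    (γ : Kˣ) (b j t : ℤ) :
    Algebra.trace F K ((γ : K) ^ b * (γ : K) ^ (((q : ℤ) - 1) * j)) =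
      Algebra.trace F K ((γ : K) ^ b * (γ : K) ^ (((q : ℤ) - 1) * (j + t))) ↔
      (orderOf (γ ^ ((q : ℤ) - 1)) : ℤ) ∣ t ∨
        (orderOf (γ ^ ((q : ℤ) - 1)) : ℤ) ∣ 2 * j + t - b := by
  subst hF
  set u := γ ^ ((Nat.card F : ℤ) - 1) with hu
  have hγ : γ ^ (Nat.card F ^ 2) = γ := by
    have := Fintype.ofFinite K
    ext
    rw [Units.val_pow_eq_pow_val, ← hK, Nat.card_eq_fintype_card, FiniteField.pow_card]
  have hnorm : (u ^ t) ^ (Nat.card F + 1) = 1 := by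
    rw [← zpow_natCast, zpow_comm, zpow_natCast, zpow_sub_one_pow_add_one_eq_one hγ, one_zpow]
  have hxs : γ ^ b * γ ^ (((Nat.card F : ℤ) - 1) * (j + t)) = γ ^ b * u ^ j * u ^ t := by
    rw [zpow_mul, ← hu, zpow_add, mul_assoc]
  have hs : ((u ^ t : Kˣ) : K) ^ (Nat.card F + 1) = 1 := by
    rw [← Units.val_pow_eq_pow_val, hnorm, Units.val_one]
  have htrace := trace_eq_trace_mul_iff (finrank_eq_two_of_natCard_eq_sq hK) hs
    ((γ ^ b * u ^ j : Kˣ) : K)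
  simp only [← Units.val_zpow_eq_zpow_val, ← Units.val_mul, ← Units.val_pow_eq_pow_val,
    Units.val_eq_one, Units.val_inj] at htrace ⊢
  rw [hxs, zpow_mul, ← hu, htrace, zpow_mul_zpow_sub_one_zpow_pow hγ, mul_right_inj,
    orderOf_dvd_iff_zpow_eq_one, eq_comm (b := u ^ t), ← orderOf_dvd_sub_iff_zpow_eq_zpow]
  ring_nf

end QuadraticExtension

/-- For integers `b`, `j`, `t` with `0 < t < q+1`:
`Tr(γ^b · γ^{(q−1)j}) = Tr(γ^b · γ^{(q−1)(j+t)})` iff `(q+1) ∣ (2j + t − b)`. -/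
theorem trace_eq_iff_dvd
    (q : ℕ) (F K : Type) [Field F] [Fintype F] [Field K] [Fintype K] [Algebra F K]
    (hF : Fintype.card F = q) (hK : Fintype.card K = q ^ 2)
    (γ : Kˣ) (hγ : ∀ x : Kˣ, x ∈ Subgroup.zpowers γ)
    (htr : ∀ x : K, algebraMap F K (Algebra.trace F K x) = x + x ^ q)
    (b j t : ℤ) (ht0 : 0 < t) (ht1 : t < (q : ℤ) + 1) :
    Algebra.trace F K ((γ : K) ^ b * (γ : K) ^ (((q : ℤ) - 1) * j)) =
      Algebra.trace F K ((γ : K) ^ b * (γ : K) ^ (((q : ℤ) - 1) * (j + t))) ↔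
      ((q : ℤ) + 1) ∣ (2 * j + t - b) := by
  rw [Fintype.card_eq_nat_card] at hF hK
  have hnt : ¬ (q : ℤ) + 1 ∣ t := fun h ↦ (Int.le_of_dvd ht0 h).not_gt ht1
  rw [trace_eq_iff_dvd_general hF hK, orderOf_zpow_sub_one_of_forall_mem_zpowers hK hγ,
    Nat.cast_add_one, or_iff_right hnt]
end

section
/- For every nonzero β ∈ F_{q^2} and every s ∈ F_q, #Occr(s, c(β)) ≤ 2; that is, at most two indices i with 0 ≤ i ≤ q satisfy Tr(β·γ^{(q−1)i}) = s. -/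
open scoped Classical

/-- The number of indices `i` (with `0 ≤ i ≤ q`) where `V i = s`. -/
noncomputable def occr {n : ℕ} {F : Type} (s : F) (V : Fin n → F) : ℕ :=
  (Finset.filter (fun i => V i = s) Finset.univ).card

/-- The Hamming weight of a vector: the number of its nonzero entries. -/
noncomputable def hwt {n : ℕ} {F : Type} [Zero F] (V : Fin n → F) : ℕ :=
  (Finset.filter (fun i => V i ≠ 0) Finset.univ).card

/-- The codeword `c(β) = (Tr(β·γ^{(q−1)i}))_{i=0}^{q}` of the irreducible cyclic code
`C_{(q+1,q²)}`. -/
noncomputable def cw (q : ℕ) (F : Type) {K : Type} [Field F] [Field K] [Algebra F K]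
    (γ : Kˣ) (β : K) : Fin (q + 1) → F :=
  fun i => Algebra.trace F K (β * (γ : K) ^ (((q : ℤ) - 1) * ((i : ℕ) : ℤ)))

/-!
On a `(q + 1)`-th root of unity `u` one has `u ^ q = u⁻¹`, so multiplying the equation
`β u + (β u) ^ q = s` by `u` turns it into the quadratic `β u² - s u + β ^ q = 0`, which has at most
two roots. The entries of `c(β)` are indexed by the `q + 1` distinct powers of the primitive
`(q + 1)`-th root of unity `γ ^ (q - 1)`.
-/

open Polynomial in
theorem card_le_two_of_forall_quadratic_eq_zero {R : Type*} [CommRing R] [IsDomain R]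
    {a b c : R} (ha : a ≠ 0) {S : Finset R} (hS : ∀ x ∈ S, a * x ^ 2 + b * x + c = 0) :
    S.card ≤ 2 := by
  have hdeg : (C a * X ^ 2 + C b * X + C c).natDegree = 2 := natDegree_quadratic ha
  have hne : C a * X ^ 2 + C b * X + C c ≠ 0 := ne_zero_of_natDegree_gt (hdeg ▸ two_pos)
  rw [← hdeg]
  refine card_le_degree_of_subset_roots fun x hx ↦ ?_
  simpa [hne] using hS x hx

theorem quadratic_eq_zero_of_pow_succ_eq_one {R : Type*} [CommRing R] {q : ℕ} {β u t : R}
    (hu : u ^ (q + 1) = 1) (ht : β * u + (β * u) ^ q = t) :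
    β * u ^ 2 + -t * u + β ^ q = 0 := by
  rw [mul_pow] at ht
  linear_combination u * ht - β ^ q * hu

theorem card_nthRootsFinset_filter_trace_le_two {F K : Type*} [Field F] [Field K] [Algebra F K]
    {q : ℕ} (htr : ∀ x : K, algebraMap F K (Algebra.trace F K x) = x + x ^ q)
    {β : K} (hβ : β ≠ 0) (s : F) :
    {u ∈ Polynomial.nthRootsFinset (q + 1) (1 : K) | Algebra.trace F K (β * u) = s}.card ≤ 2 := by
  refine card_le_two_of_forall_quadratic_eq_zero (b := -algebraMap F K s) (c := β ^ q) hβ ?_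
  intro u hu
  obtain ⟨hroot, hs⟩ := Finset.mem_filter.mp hu
  refine quadratic_eq_zero_of_pow_succ_eq_one
    ((Polynomial.mem_nthRootsFinset q.succ_pos 1).mp hroot) ?_
  rw [← htr, hs]

theorem isPrimitiveRoot_card_sub_one_of_generator {K : Type*} [Field K] [Fintype K]
    {γ : Kˣ} (hγ : ∀ x : Kˣ, x ∈ Subgroup.zpowers γ) :
    IsPrimitiveRoot γ (Fintype.card K - 1) := by
  rw [← Fintype.card_units, ← Nat.card_eq_fintype_card, ← orderOf_eq_card_of_forall_mem_zpowers hγ]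
  exact IsPrimitiveRoot.orderOf γ

theorem isPrimitiveRoot_zpow_sub_one {G : Type*} [DivisionCommMonoid G] {q : ℕ} (hq : 1 < q)
    {γ : G} (hγ : IsPrimitiveRoot γ (q ^ 2 - 1)) :
    IsPrimitiveRoot (γ ^ ((q : ℤ) - 1)) (q + 1) := by
  have hfactor : q ^ 2 - 1 = (q - 1) * (q + 1) := by
    rw [mul_comm, ← Nat.sq_sub_sq, one_pow]
  rw [← Nat.cast_pred (zero_lt_one.trans hq), zpow_natCast]
  exact hγ.pow (Nat.sub_pos_of_lt (Nat.one_lt_pow two_ne_zero hq)) hfactor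

theorem cw_apply {q : ℕ} {F K : Type} [Field F] [Field K] [Algebra F K] (γ : Kˣ) (β : K)
    (i : Fin (q + 1)) :
    cw q F γ β i = Algebra.trace F K (β * ((γ ^ ((q : ℤ) - 1) : Kˣ) : K) ^ (i : ℕ)) := by
  rw [cw, zpow_mul, zpow_natCast, Units.val_zpow_eq_zpow_val]

theorem occr_le_two_general {q : ℕ} {F K : Type} [Field F] [Field K] [Algebra F K]
    (htr : ∀ x : K, algebraMap F K (Algebra.trace F K x) = x + x ^ q)
    {γ : Kˣ} (hγ : IsPrimitiveRoot (γ ^ ((q : ℤ) - 1)) (q + 1))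
    {β : K} (hβ : β ≠ 0) (s : F) :
    occr s (cw q F γ β) ≤ 2 := by
  set ζ : K := ((γ ^ ((q : ℤ) - 1) : Kˣ) : K)
  have hζ : IsPrimitiveRoot ζ (q + 1) := IsPrimitiveRoot.coe_units_iff.mpr hγ
  have hmaps : ∀ i : Fin (q + 1), cw q F γ β i = s → ζ ^ (i : ℕ) ∈
      {u ∈ Polynomial.nthRootsFinset (q + 1) (1 : K) | Algebra.trace F K (β * u) = s} := by
    intro i hi
    have hroot : (ζ ^ (i : ℕ)) ^ (q + 1) = 1 := by
      rw [pow_right_comm, hζ.pow_eq_one, one_pow]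
    rw [Finset.mem_filter, Polynomial.mem_nthRootsFinset q.succ_pos]
    exact ⟨hroot, by rw [← hi, cw_apply]⟩
  have hinj : Function.Injective fun i : Fin (q + 1) ↦ ζ ^ (i : ℕ) :=
    fun i j hij ↦ Fin.ext (hζ.pow_inj i.isLt j.isLt hij)
  calc occr s (cw q F γ β)
      ≤ {u ∈ Polynomial.nthRootsFinset (q + 1) (1 : K) | Algebra.trace F K (β * u) = s}.card :=
        Finset.card_le_card_of_injOn _ (fun i hi ↦ hmaps i (Finset.mem_filter.mp hi).2)
          hinj.injOn
    _ ≤ 2 := card_nthRootsFinset_filter_trace_le_two htr hβ s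

/-- For every nonzero `β ∈ F_{q²}` and every `s ∈ F_q`, the symbol `s` occurs at most
twice in the codeword `c(β)`. -/
theorem occr_le_two
    (q : ℕ) (F K : Type) [Field F] [Fintype F] [Field K] [Fintype K] [Algebra F K]
    (hF : Fintype.card F = q) (hK : Fintype.card K = q ^ 2)
    (γ : Kˣ) (hγ : ∀ x : Kˣ, x ∈ Subgroup.zpowers γ)
    (htr : ∀ x : K, algebraMap F K (Algebra.trace F K x) = x + x ^ q)
    (β : K) (hβ : β ≠ 0) (s : F) :
    occr s (cw q F γ β) ≤ 2 := by
  have hγ_prim : IsPrimitiveRoot γ (q ^ 2 - 1) := hK ▸ isPrimitiveRoot_card_sub_one_of_generator hγ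
  exact occr_le_two_general htr
    (isPrimitiveRoot_zpow_sub_one (hF ▸ Fintype.one_lt_card) hγ_prim) hβ s
end

section
/- Suppose q is even. Let β ∈ F_{q^2} be nonzero and let s ∈ F_q satisfy #Occr(s, c(β)) = 2. Then s ≠ 0. -/
open scoped Classical

/-!
Write `c(β)_i = Tr x` with `x = β ζ ^ i`, where `ζ = γ ^ (q - 1)` has order `q + 1`. All these `x`
have the same norm `x ^ (q + 1) = β ^ (q + 1)`, and `Tr x = 0` means `x ^ q = -x`, so every zero
entry yields `x ^ 2 = -β ^ (q + 1)`. In characteristic two a square determines its root, so `c(β)`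
has at most one zero entry.
-/

theorem charP_two_of_even_card {K : Type*} [Field K] [Fintype K] (hK : Even (Fintype.card K)) :
    CharP K 2 :=
  ringChar.of_eq (FiniteField.even_card_iff_char_two.2 (Nat.even_iff.1 hK))

theorem orderOf_pow_sub_one_of_orderOf_eq_sq_sub_one {M : Type*} [Monoid M] {g : M} {q : ℕ}
    (hq : 1 < q) (hg : orderOf g = q ^ 2 - 1) : orderOf (g ^ (q - 1)) = q + 1 := by
  have hfactor : orderOf g = (q + 1) * (q - 1) := by
    rw [hg, ← Nat.sq_sub_sq, one_pow]
  have hpos : 0 < q - 1 := Nat.sub_pos_of_lt hq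
  rw [orderOf_pow_of_dvd hpos.ne' (hfactor ▸ Dvd.intro_left _ rfl), hfactor,
    Nat.mul_div_cancel _ hpos]

theorem orderOf_zpow_sub_one_of_card_eq_sq {K : Type*} [Field K] [Fintype K] {q : ℕ} {γ : Kˣ}
    (hK : Fintype.card K = q ^ 2) (hγ : ∀ x : Kˣ, x ∈ Subgroup.zpowers γ) :
    orderOf ((γ : K) ^ ((q : ℤ) - 1)) = q + 1 := by
  have hq : 1 < q := (one_lt_sq_iff₀ q.zero_le).1 (hK ▸ Fintype.one_lt_card)
  have hγ_order : orderOf (γ : K) = q ^ 2 - 1 := by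
    rw [orderOf_units, orderOf_eq_card_of_forall_mem_zpowers hγ, Nat.card_eq_fintype_card,
      Fintype.card_units, hK]
  rw [← Nat.cast_pred (Nat.zero_lt_of_lt hq), zpow_natCast]
  exact orderOf_pow_sub_one_of_orderOf_eq_sq_sub_one hq hγ_order

theorem sq_mul_eq_neg_pow_succ {R : Type*} [CommRing R] {q : ℕ} {β u : R}
    (hu : u ^ (q + 1) = 1) (htrace : β * u + (β * u) ^ q = 0) :
    (β * u) ^ 2 = -β ^ (q + 1) := by
  have hnorm : (β * u) ^ (q + 1) = β ^ (q + 1) := by rw [mul_pow, hu, mul_one]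
  linear_combination (β * u) * htrace - hnorm

section Codeword

variable {F K : Type} [Field F] [Field K] [Algebra F K] {q : ℕ} {γ : Kˣ} {β : K}

theorem cw_apply_eq_trace_mul_pow (i : Fin (q + 1)) :
    cw q F γ β i = Algebra.trace F K (β * ((γ : K) ^ ((q : ℤ) - 1)) ^ (i : ℕ)) := by
  rw [cw, zpow_mul, zpow_natCast]

theorem sq_eq_neg_pow_succ_of_cw_eq_zero (hζ : ((γ : K) ^ ((q : ℤ) - 1)) ^ (q + 1) = 1)
    (htr : ∀ x : K, algebraMap F K (Algebra.trace F K x) = x + x ^ q)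
    {i : Fin (q + 1)} (hi : cw q F γ β i = 0) :
    (β * ((γ : K) ^ ((q : ℤ) - 1)) ^ (i : ℕ)) ^ 2 = -β ^ (q + 1) := by
  apply sq_mul_eq_neg_pow_succ
  · rw [pow_right_comm, hζ, one_pow]
  · rw [← htr, ← cw_apply_eq_trace_mul_pow, hi, map_zero]

theorem occr_zero_cw_le_one [CharP K 2] (hζ : orderOf ((γ : K) ^ ((q : ℤ) - 1)) = q + 1)
    (htr : ∀ x : K, algebraMap F K (Algebra.trace F K x) = x + x ^ q) (hβ : β ≠ 0) :
    occr 0 (cw q F γ β) ≤ 1 := by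
  refine Finset.card_le_one.2 fun i hi j hj => ?_
  have hζ_pow : ((γ : K) ^ ((q : ℤ) - 1)) ^ (q + 1) = 1 := hζ ▸ pow_orderOf_eq_one _
  have hsq_i := sq_eq_neg_pow_succ_of_cw_eq_zero hζ_pow htr (Finset.mem_filter.1 hi).2
  have hsq_j := sq_eq_neg_pow_succ_of_cw_eq_zero hζ_pow htr (Finset.mem_filter.1 hj).2
  have hpow : ((γ : K) ^ ((q : ℤ) - 1)) ^ (i : ℕ) = ((γ : K) ^ ((q : ℤ) - 1)) ^ (j : ℕ) :=
    mul_left_cancel₀ hβ (CharTwo.sq_injective (hsq_i.trans hsq_j.symm))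
  exact Fin.ext (pow_injOn_Iio_orderOf (i.isLt.trans_eq hζ.symm) (j.isLt.trans_eq hζ.symm) hpow)

end Codeword

/-- Suppose `q` is even. If the symbol `s ∈ F_q` occurs exactly twice in the codeword
`c(β)` (with `β ≠ 0`), then `s ≠ 0`. -/
theorem ne_zero_of_occr_eq_two_of_even
    (q : ℕ) (F K : Type) [Field F] [Fintype F] [Field K] [Fintype K] [Algebra F K]
    (hF : Fintype.card F = q) (hK : Fintype.card K = q ^ 2)
    (γ : Kˣ) (hγ : ∀ x : Kˣ, x ∈ Subgroup.zpowers γ)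
    (htr : ∀ x : K, algebraMap F K (Algebra.trace F K x) = x + x ^ q)
    (hq : Even q)
    (β : K) (hβ : β ≠ 0) (s : F) (h : occr s (cw q F γ β) = 2) :
    s ≠ 0 := by
  rintro rfl
  have hchar : CharP K 2 := charP_two_of_even_card (hK ▸ hq.pow_of_ne_zero two_ne_zero)
  have hζ : orderOf ((γ : K) ^ ((q : ℤ) - 1)) = q + 1 := orderOf_zpow_sub_one_of_card_eq_sq hK hγ
  have hle : occr 0 (cw q F γ β) ≤ 1 := occr_zero_cw_le_one hζ htr hβ
  omega
end

section
/- The number of pairs (α, β) with α ∈ F_q nonzero and β ∈ F_{q^2} nonzero such that the Hamming weight of the vector (α + Tr(β·γ^{(q−1)i}))_{i=0}^{q} ∈ F_q^{q+1} equals q, is q² − 1 if q is odd, and is 0 if q is even. -/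
open scoped Classical

/-!
The elements `β * γ ^ ((q - 1) * i)`, `0 ≤ i ≤ q`, are exactly the `x ∈ F_{q²}` with `N x = N β`.
So the weight is `q` iff exactly one `x` has norm `N β` and trace `-α`. The conjugate `-α - x`
has the same norm and trace as `x`, hence a unique `x` is a double root of `X² + α X + N β`, and
for `α ≠ 0` the condition becomes the vanishing of the discriminant, `α² = 4 N β`. In even
characteristic this is impossible; in odd characteristic each of the `q - 1` values of `α`
leaves one nonzero value for `N β`, which is the norm of `q + 1` elements.
-/

theorem hwt_eq_iff_existsUnique {n : ℕ} {F : Type} [Zero F] (V : Fin (n + 1) → F) :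
    hwt V = n ↔ ∃! i, V i = 0 := by
  have hsum : (Finset.univ.filter fun i => V i = 0).card + hwt V = n + 1 := by
    simpa [hwt] using
      Finset.card_filter_add_card_filter_not (s := Finset.univ) (fun i => V i = 0)
  have hone : (∃! i, V i = 0) ↔ (Finset.univ.filter fun i => V i = 0).card = 1 := by
    simp only [Finset.card_eq_one_iff_existsUnique, Finset.mem_filter_univ]
  rw [hone]
  omega

theorem existsUnique_comp_iff_of_injective {ι α : Type*} {f : ι → α} (hf : Function.Injective f)
    (p : α → Prop) : (∃! i, p (f i)) ↔ ∃! x, x ∈ Set.range f ∧ p x := by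
  constructor
  · rintro ⟨i, hi, huniq⟩
    refine ⟨f i, ⟨⟨i, rfl⟩, hi⟩, ?_⟩
    rintro _ ⟨⟨j, rfl⟩, hj⟩
    rw [huniq j hj]
  · rintro ⟨_, ⟨⟨i, rfl⟩, hi⟩, huniq⟩
    exact ⟨i, hi, fun j hj => hf (huniq (f j) ⟨⟨j, rfl⟩, hj⟩)⟩

theorem card_filter_prod_eq_sum {α β : Type*} [Fintype α] [Fintype β] (p : α × β → Prop)
    [DecidablePred p] :
    (Finset.univ.filter p).card = ∑ a, {b | p (a, b)}.ncard := by
  simp only [Set.ncard_eq_toFinset_card', Set.toFinset_ofPred, Finset.card_filter,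
    Fintype.sum_prod_type]

theorem injective_pow_mul {M₀ : Type*} [CommMonoidWithZero M₀] [IsCancelMulZero M₀] {k : ℕ}
    {ζ b : M₀} (hζ : IsPrimitiveRoot ζ k) (hb : b ≠ 0) :
    Function.Injective (fun i : Fin k => ζ ^ (i : ℕ) * b) :=
  fun i j h => Fin.ext (hζ.injOn_pow_mul hb (by simp) (by simp) h)

theorem range_pow_mul_eq_setOf_pow_eq {R : Type*} [CommRing R] [IsDomain R] {k : ℕ} [NeZero k]
    {ζ : R} (hζ : IsPrimitiveRoot ζ k) (b : R) :
    Set.range (fun i : Fin k => ζ ^ (i : ℕ) * b) = {x | x ^ k = b ^ k} := by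
  ext x
  rw [Set.mem_ofPred_eq, ← Polynomial.mem_nthRoots (NeZero.pos k), hζ.nthRoots_eq rfl]
  simp [Fin.exists_iff]

section QuadraticAlgebra

variable {R S : Type*} [CommRing R] [Nontrivial R] [CommRing S] [Algebra R S]
  [Algebra.IsQuadraticExtension R S]

theorem sq_sub_trace_mul_add_norm_eq_zero (x : S) :
    x ^ 2 - algebraMap R S (Algebra.trace R S x) * x + algebraMap R S (Algebra.norm R x) = 0 := by
  let B := Module.finBasisOfFinrankEq R S (Algebra.IsQuadraticExtension.finrank_eq_two R S)
  have cayley_hamilton := Matrix.aeval_self_charpoly (Algebra.leftMulMatrix B x)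
  rw [Matrix.charpoly_fin_two, Polynomial.aeval_algHom_apply,
    map_eq_zero_iff _ (Algebra.leftMulMatrix_injective B)] at cayley_hamilton
  simpa [Algebra.trace_eq_matrix_trace B, Algebra.norm_eq_matrix_det B] using cayley_hamilton

theorem algebraMap_trace_sq_sub_four_mul_norm (x : S) :
    algebraMap R S (Algebra.trace R S x ^ 2 - 4 * Algebra.norm R x) =
      (algebraMap R S (Algebra.trace R S x) - 2 * x) ^ 2 := by
  rw [map_sub, map_mul, map_pow, map_ofNat]
  linear_combination -4 * sq_sub_trace_mul_add_norm_eq_zero (R := R) x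

theorem trace_algebraMap_eq_two_mul (c : R) : Algebra.trace R S (algebraMap R S c) = 2 * c := by
  rw [Algebra.trace_algebraMap, Algebra.IsQuadraticExtension.finrank_eq_two R S, nsmul_eq_mul,
    Nat.cast_ofNat]

theorem norm_algebraMap_eq_sq (c : R) : Algebra.norm R (algebraMap R S c) = c ^ 2 := by
  rw [Algebra.norm_algebraMap_of_basis
    (Module.finBasisOfFinrankEq R S (Algebra.IsQuadraticExtension.finrank_eq_two R S)),
    Fintype.card_fin]

theorem trace_trace_sub_self (x : S) :
    Algebra.trace R S (algebraMap R S (Algebra.trace R S x) - x) = Algebra.trace R S x := by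
  rw [map_sub, trace_algebraMap_eq_two_mul, two_mul, add_sub_cancel_right]

theorem norm_trace_sub_self (x : S) :
    Algebra.norm R (algebraMap R S (Algebra.trace R S x) - x) = Algebra.norm R x := by
  let B := Module.finBasisOfFinrankEq R S (Algebra.IsQuadraticExtension.finrank_eq_two R S)
  simp only [Algebra.norm_eq_matrix_det B, Algebra.trace_eq_matrix_trace B, map_sub,
    AlgHom.commutes, Matrix.det_fin_two, Matrix.trace_fin_two, Matrix.sub_apply,
    Matrix.algebraMap_matrix_apply, Algebra.algebraMap_self, RingHom.id_apply, if_pos,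
    if_neg zero_ne_one, if_neg one_ne_zero]
  ring

end QuadraticAlgebra

theorem existsUnique_norm_eq_and_trace_eq_iff {F K : Type*} [Field F] [Field K] [Algebra F K]
    [Algebra.IsQuadraticExtension F K] {n t : F} (ht : t ≠ 0) :
    (∃! x : K, Algebra.norm F x = n ∧ Algebra.trace F K x = t) ↔ t ^ 2 = 4 * n := by
  constructor
  · rintro ⟨x, ⟨rfl, rfl⟩, huniq⟩
    have self_conj : algebraMap F K (Algebra.trace F K x) - x = x :=
      huniq _ ⟨norm_trace_sub_self x, trace_trace_sub_self x⟩
    rw [← sub_eq_zero, ← map_eq_zero (algebraMap F K), algebraMap_trace_sq_sub_four_mul_norm,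
      two_mul, ← sub_sub, self_conj, sub_self, zero_pow two_ne_zero]
  · intro hdisc
    have two_ne : (2 : F) ≠ 0 := by
      intro h
      apply pow_ne_zero 2 ht
      linear_combination hdisc + 2 * n * h
    refine ⟨algebraMap F K (t / 2), ⟨?_, ?_⟩, ?_⟩
    · rw [norm_algebraMap_eq_sq]
      field_simp
      linear_combination hdisc
    · rw [trace_algebraMap_eq_two_mul, mul_div_cancel₀ t two_ne]
    · rintro y ⟨rfl, rfl⟩
      have hsq := algebraMap_trace_sq_sub_four_mul_norm (R := F) y
      rw [hdisc, sub_self, map_zero, eq_comm, sq_eq_zero_iff, sub_eq_zero] at hsq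
      have two_ne_K : (2 : K) ≠ 0 := by
        rw [← map_ofNat (algebraMap F K) 2]
        exact (map_ne_zero _).2 two_ne
      rw [map_div₀, map_ofNat, hsq, mul_div_cancel_left₀ y two_ne_K]

section FiniteField

theorem even_natCard_iff_two_eq_zero {F : Type*} [Field F] [Finite F] :
    Even (Nat.card F) ↔ (2 : F) = 0 := by
  have := Fintype.ofFinite F
  rw [Nat.card_eq_fintype_card, Nat.even_iff, ← FiniteField.even_card_iff_char_two,
    ← Nat.cast_ofNat (R := F), ringChar.spec,
    Nat.prime_dvd_prime_iff_eq (CharP.char_is_prime F (ringChar F)) Nat.prime_two]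

theorem isPrimitiveRoot_generator_pow {K : Type*} [Field K] [Finite K] {q : ℕ}
    (hK : Nat.card K = q ^ 2) {γ : Kˣ} (hγ : ∀ x : Kˣ, x ∈ Subgroup.zpowers γ) :
    IsPrimitiveRoot ((γ : K) ^ (q - 1)) (q + 1) := by
  have horder : orderOf γ = (q - 1) * (q + 1) := by
    rw [orderOf_eq_card_of_forall_mem_zpowers hγ, Nat.card_units, hK, mul_comm,
      ← Nat.sq_sub_sq, one_pow]
  exact (IsPrimitiveRoot.coe_units_iff.2 (IsPrimitiveRoot.orderOf γ)).pow (orderOf_pos γ) horder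

variable {F K : Type*} [Field F] [Field K] [Finite K] [Algebra F K]

theorem isQuadraticExtension_iff_natCard_eq_sq :
    Algebra.IsQuadraticExtension F K ↔ Nat.card K = Nat.card F ^ 2 := by
  have := Finite.of_injective _ (algebraMap F K).injective
  rw [Module.natCard_eq_pow_finrank (K := F) (V := K),
    (Nat.pow_right_injective Finite.one_lt_card).eq_iff]
  exact ⟨fun h => h.finrank_eq_two, fun h => ⟨h⟩⟩

variable [Algebra.IsQuadraticExtension F K]

theorem algebraMap_norm_eq_pow_natCard_add_one (x : K) :
    algebraMap F K (Algebra.norm F x) = x ^ (Nat.card F + 1) := by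
  rw [FiniteField.algebraMap_norm_eq_pow_sum, Algebra.IsQuadraticExtension.finrank_eq_two F K,
    Finset.sum_range_succ, Finset.sum_range_one, pow_zero, pow_one, add_comm]

theorem range_pow_mul_eq_setOf_norm_eq {ζ : K} (hζ : IsPrimitiveRoot ζ (Nat.card F + 1)) (b : K) :
    Set.range (fun i : Fin (Nat.card F + 1) => ζ ^ (i : ℕ) * b) =
      {x | Algebra.norm F x = Algebra.norm F b} := by
  simp only [range_pow_mul_eq_setOf_pow_eq hζ, ← algebraMap_norm_eq_pow_natCard_add_one,
    (algebraMap F K).injective.eq_iff]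

theorem ncard_setOf_norm_eq {c : F} (hc : c ≠ 0) :
    {x : K | Algebra.norm F x = c}.ncard = Nat.card F + 1 := by
  obtain ⟨b, rfl⟩ := FiniteField.norm_surjective F K c
  have hb : b ≠ 0 := fun h => hc (h ▸ Algebra.norm_zero)
  obtain ⟨γ, hγ⟩ := IsCyclic.exists_generator (α := Kˣ)
  have hζ := isPrimitiveRoot_generator_pow
    ((isQuadraticExtension_iff_natCard_eq_sq (F := F)).1 inferInstance) hγ
  rw [← range_pow_mul_eq_setOf_norm_eq hζ b, ← Nat.card_coe_set_eq,
    Nat.card_range_of_injective (injective_pow_mul hζ hb), Nat.card_fin]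

end FiniteField

theorem card_filter_sq_eq_four_mul_norm {F K : Type*} [Field F] [Fintype F] [Field K] [Fintype K]
    [Algebra F K] [Algebra.IsQuadraticExtension F K] (two_ne : (2 : F) ≠ 0) :
    (Finset.univ.filter fun p : F × K => p.1 ≠ 0 ∧ p.1 ^ 2 = 4 * Algebra.norm F p.2).card =
      Nat.card F ^ 2 - 1 := by
  have four_ne : (4 : F) ≠ 0 := by
    rw [← two_add_two_eq_four, ← two_mul]
    exact mul_ne_zero two_ne two_ne
  have fiber_ncard (a : F) : {b : K | a ≠ 0 ∧ a ^ 2 = 4 * Algebra.norm F b}.ncard =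
      if a ≠ 0 then Nat.card F + 1 else 0 := by
    split_ifs with ha
    · have hc : a ^ 2 / 4 ≠ 0 := div_ne_zero (pow_ne_zero 2 ha) four_ne
      rw [← ncard_setOf_norm_eq (K := K) hc]
      simp only [ha, ne_eq, not_false_eq_true, true_and, eq_div_iff four_ne, mul_comm, eq_comm]
    · simp [not_not.1 ha]
  rw [card_filter_prod_eq_sum]
  simp only [fiber_ncard]
  rw [← Finset.sum_filter, Finset.sum_const, Finset.filter_ne',
    Finset.card_erase_of_mem (Finset.mem_univ 0), Finset.card_univ, smul_eq_mul,
    ← Nat.card_eq_fintype_card, mul_comm, ← Nat.sq_sub_sq, one_pow]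

section Codeword

variable {F K : Type} [Field F] [Field K] [Algebra F K]

theorem cw_eq_trace_pow_mul {q : ℕ} (hq : 0 < q) (γ : Kˣ) (b : K) (i : Fin (q + 1)) :
    cw q F γ b i = Algebra.trace F K (((γ : K) ^ (q - 1)) ^ (i : ℕ) * b) := by
  rw [cw, ← Nat.cast_pred hq, ← Nat.cast_mul, zpow_natCast, pow_mul, mul_comm]

theorem hwt_add_cw_eq_natCard_iff [Finite K] [Algebra.IsQuadraticExtension F K] {γ : Kˣ}
    (hγ : ∀ x : Kˣ, x ∈ Subgroup.zpowers γ) {a : F} (ha : a ≠ 0) {b : K} (hb : b ≠ 0) :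
    hwt (fun i : Fin (Nat.card F + 1) => a + cw (Nat.card F) F γ b i) = Nat.card F ↔
      a ^ 2 = 4 * Algebra.norm F b := by
  have := Finite.of_injective _ (algebraMap F K).injective
  have hζ := isPrimitiveRoot_generator_pow
    ((isQuadraticExtension_iff_natCard_eq_sq (F := F)).1 inferInstance) hγ
  calc
    _ ↔ ∃! i : Fin (Nat.card F + 1),
          Algebra.trace F K (((γ : K) ^ (Nat.card F - 1)) ^ (i : ℕ) * b) = -a := by
        simp only [hwt_eq_iff_existsUnique, cw_eq_trace_pow_mul Nat.card_pos,
          add_eq_zero_iff_eq_neg']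
    _ ↔ ∃! x : K, Algebra.norm F x = Algebra.norm F b ∧ Algebra.trace F K x = -a := by
        rw [existsUnique_comp_iff_of_injective (injective_pow_mul hζ hb)
          (fun x => Algebra.trace F K x = -a), range_pow_mul_eq_setOf_norm_eq hζ]
        rfl
    _ ↔ a ^ 2 = 4 * Algebra.norm F b := by
        rw [existsUnique_norm_eq_and_trace_eq_iff (neg_ne_zero.2 ha), neg_sq]

theorem filter_hwt_add_cw_eq [Fintype F] [Fintype K] [Algebra.IsQuadraticExtension F K] {γ : Kˣ}
    (hγ : ∀ x : Kˣ, x ∈ Subgroup.zpowers γ) :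
    (Finset.univ.filter fun p : F × K => p.1 ≠ 0 ∧ p.2 ≠ 0 ∧
        hwt (fun i : Fin (Nat.card F + 1) => p.1 + cw (Nat.card F) F γ p.2 i) = Nat.card F) =
      Finset.univ.filter fun p : F × K => p.1 ≠ 0 ∧ p.1 ^ 2 = 4 * Algebra.norm F p.2 := by
  refine Finset.filter_congr fun ⟨a, b⟩ _ => and_congr_right fun ha => ?_
  constructor
  · rintro ⟨hb, hwt_eq⟩
    exact (hwt_add_cw_eq_natCard_iff hγ ha hb).1 hwt_eq
  · intro hdisc
    have hb : b ≠ 0 := by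
      rintro rfl
      exact pow_ne_zero 2 ha (by simpa using hdisc)
    exact ⟨hb, (hwt_add_cw_eq_natCard_iff hγ ha hb).2 hdisc⟩

end Codeword

/-- The number of pairs `(α, β)` with `α ∈ F_q^×` and `β ∈ F_{q²}^×` such that the vector
`(α + Tr(β·γ^{(q−1)i}))_{i=0}^{q}` has Hamming weight exactly `q` is `q² − 1` if `q` is
odd, and `0` if `q` is even. -/
theorem card_weight_q
    (q : ℕ) (F K : Type) [Field F] [Fintype F] [Field K] [Fintype K] [Algebra F K]
    (hF : Fintype.card F = q) (hK : Fintype.card K = q ^ 2)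
    (γ : Kˣ) (hγ : ∀ x : Kˣ, x ∈ Subgroup.zpowers γ)
    (htr : ∀ x : K, algebraMap F K (Algebra.trace F K x) = x + x ^ q) :
    (Odd q →
      (Finset.filter (fun p : F × K => p.1 ≠ 0 ∧ p.2 ≠ 0 ∧
          hwt (fun i : Fin (q + 1) => p.1 + cw q F γ p.2 i) = q) Finset.univ).card
        = q ^ 2 - 1) ∧
    (Even q →
      (Finset.filter (fun p : F × K => p.1 ≠ 0 ∧ p.2 ≠ 0 ∧
          hwt (fun i : Fin (q + 1) => p.1 + cw q F γ p.2 i) = q) Finset.univ).card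
        = 0) := by
  rw [← Nat.card_eq_fintype_card] at hF hK
  subst hF
  have := isQuadraticExtension_iff_natCard_eq_sq.2 hK
  rw [filter_hwt_add_cw_eq hγ]
  refine ⟨fun hodd => card_filter_sq_eq_four_mul_norm fun two_eq => ?_, fun heven => ?_⟩
  · exact Nat.not_even_iff_odd.2 hodd (even_natCard_iff_two_eq_zero.2 two_eq)
  · rw [Finset.card_eq_zero, Finset.filter_eq_empty_iff]
    rintro ⟨a, b⟩ - ⟨ha, hdisc⟩
    refine pow_ne_zero 2 ha ?_
    linear_combination hdisc + 2 * Algebra.norm F b * even_natCard_iff_two_eq_zero.1 heven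
end

section
/- The code C_{(1,q+1,q^2)} has exactly q³ codewords, every nonzero codeword has Hamming weight q−1, q, or q+1, each of these three weights actually occurs, and the number of codewords of Hamming weight exactly q is q² − 1. -/
open scoped Classical

/-- The cyclic code `C_{(1,q+1,q²)} ⊆ F_q^{q+1}`, consisting of the vectors
`c(α,β)_i = α + Tr(β·γ^{(q−1)i})` for `α ∈ F_q`, `β ∈ F_{q²}`. -/
noncomputable def code (q : ℕ) (F : Type) {K : Type} [Field F] [Fintype F] [Field K]
    [Fintype K] [Algebra F K] (γ : Kˣ) : Finset (Fin (q + 1) → F) :=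
  Finset.image (fun p : F × K => fun i : Fin (q + 1) => p.1 + cw q F γ p.2 i) Finset.univ

/-!
The powers of `ζ = γ^(q-1)` are the `q + 1` elements `u` of `F_{q²}` with `u^(q+1) = 1`. For such
`u` one has `u * (α + Tr(β u)) = β u² + α u + β^q`, and if this quadratic (with `β ≠ 0`) vanishes at
`u`, then its other root is `β^(q-1) / u`, again one of the `q + 1` elements. So a nonzero codeword
has at most two zeros, and a zero at `u` is the only one exactly when `β^(q-1) = u²`. For each `u`
this equation has `q - 1` solutions `β`, which gives `(q + 1)(q - 1)` codewords of weight `q`.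
-/

theorem occr_zero_add_hwt {n : ℕ} {F : Type} [Zero F] (v : Fin n → F) :
    occr 0 v + hwt v = n := by
  have hcard := Finset.card_filter_add_card_filter_not (s := Finset.univ) fun i => v i = 0
  rwa [Finset.card_univ, Fintype.card_fin] at hcard

theorem hwt_eq_of_forall_ne_zero {n : ℕ} {F : Type} [Zero F] {v : Fin n → F}
    (hv : ∀ i, v i ≠ 0) : hwt v = n := by
  simp [hwt, hv]

theorem pow_fin_injective {M : Type*} [CommMonoid M] {n : ℕ} {ζ : M} (hζ : IsPrimitiveRoot ζ n) :
    Function.Injective fun i : Fin n => ζ ^ (i : ℕ) :=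
  fun i j hij => Fin.ext (hζ.pow_inj i.isLt j.isLt hij)

theorem sub_one_mul_add_one_eq_card_sub_one {α : Type*} [Fintype α] {q : ℕ}
    (hα : Fintype.card α = q ^ 2) : (q - 1) * (q + 1) = Fintype.card α - 1 := by
  rw [hα, mul_comm, ← Nat.sq_sub_sq, one_pow]

section FiniteField

variable {K : Type*} [Field K] [Fintype K] {m n : ℕ}

theorem isPrimitiveRoot_generator_pow_s10 (hmn : m * n = Fintype.card K - 1) {γ : Kˣ}
    (hγ : ∀ x : Kˣ, x ∈ Subgroup.zpowers γ) : IsPrimitiveRoot ((γ : K) ^ m) n := by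
  have horder : orderOf γ = m * n := by
    rw [orderOf_eq_card_of_forall_mem_zpowers hγ, Nat.card_eq_fintype_card, Fintype.card_units, hmn]
  have hroot : IsPrimitiveRoot (γ : K) (orderOf γ) :=
    IsPrimitiveRoot.coe_units_iff.2 (IsPrimitiveRoot.orderOf γ)
  exact hroot.pow (orderOf_pos γ) horder

theorem card_nthRootsFinset_of_mul_eq_card_sub_one (hmn : m * n = Fintype.card K - 1) {c : K}
    (hc : c ^ n = 1) : (Polynomial.nthRootsFinset m c).card = m := by
  have hpos : 0 < m * n := hmn ▸ Nat.sub_pos_of_lt Fintype.one_lt_card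
  have : NeZero n := ⟨(Nat.pos_of_mul_pos_left hpos).ne'⟩
  obtain ⟨g, hg⟩ := IsCyclic.exists_generator (α := Kˣ)
  obtain ⟨k, -, hk⟩ := (isPrimitiveRoot_generator_pow_s10 hmn hg).eq_pow_of_pow_eq_one hc
  have hsolvable : ∃ b, b ^ m = c := ⟨(g : K) ^ k, by rw [← hk, pow_right_comm]⟩
  have hgn : IsPrimitiveRoot ((g : K) ^ n) m :=
    isPrimitiveRoot_generator_pow_s10 ((mul_comm n m).trans hmn) hg
  have hc0 : c ≠ 0 := (IsUnit.of_pow_eq_one hc (NeZero.ne n)).ne_zero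
  rw [Polynomial.nthRootsFinset_def, Multiset.toFinset_card_of_nodup (hgn.nthRoots_nodup hc0),
    hgn.card_nthRoots, if_pos hsolvable]

end FiniteField

section QuadraticExtension

variable {q : ℕ} {F K : Type*} [Field F] [Fintype F] [Field K] [Fintype K] [Algebra F K]

theorem algebraMap_trace_eq_add_pow (hF : Fintype.card F = q) (hK : Fintype.card K = q ^ 2)
    (x : K) : algebraMap F K (Algebra.trace F K x) = x + x ^ q := by
  have hrank : Module.finrank F K = 2 := by
    have hcard : q ^ Module.finrank F K = q ^ 2 := by
      rw [← hK, ← hF, ← Module.card_eq_pow_finrank]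
    exact Nat.pow_right_injective (hF ▸ Fintype.one_lt_card) hcard
  rw [FiniteField.algebraMap_trace_eq_sum_pow, hrank, Nat.card_eq_fintype_card, hF]
  simp [Finset.sum_range_succ]

theorem algebraMap_add_trace_mul_self (hF : Fintype.card F = q) (hK : Fintype.card K = q ^ 2)
    {u : K} (hu : u ^ (q + 1) = 1) (a : F) (b : K) :
    algebraMap F K (a + Algebra.trace F K (b * u)) * u =
      b * u ^ 2 + algebraMap F K a * u + b ^ q := by
  rw [map_add, algebraMap_trace_eq_add_pow hF hK, mul_pow]
  linear_combination b ^ q * hu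

theorem add_trace_eq_zero_iff (hF : Fintype.card F = q) (hK : Fintype.card K = q ^ 2)
    {u : K} (hu : u ^ (q + 1) = 1) (a : F) (b : K) :
    a + Algebra.trace F K (b * u) = 0 ↔ b * u ^ 2 + algebraMap F K a * u + b ^ q = 0 := by
  have hu0 : u ≠ 0 := (IsUnit.of_pow_eq_one hu q.succ_ne_zero).ne_zero
  rw [← algebraMap_add_trace_mul_self hF hK hu, mul_eq_zero, or_iff_left hu0,
    map_eq_zero_iff _ (algebraMap F K).injective]

theorem add_trace_eq_zero_iff_of_root (hF : Fintype.card F = q) (hK : Fintype.card K = q ^ 2)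
    {a : F} {b u w : K} (hb : b ≠ 0) (hu : u ^ (q + 1) = 1) (hw : w ^ (q + 1) = 1)
    (hroot : a + Algebra.trace F K (b * u) = 0) :
    a + Algebra.trace F K (b * w) = 0 ↔ w = u ∨ u * w = b ^ (q - 1) := by
  have hu0 : u ≠ 0 := (IsUnit.of_pow_eq_one hu q.succ_ne_zero).ne_zero
  have hbq : b * b ^ (q - 1) = b ^ q := mul_pow_sub_one (hF ▸ Fintype.card_ne_zero) b
  rw [add_trace_eq_zero_iff hF hK hu] at hroot
  have hfactor : u * (b * w ^ 2 + algebraMap F K a * w + b ^ q) =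
      b * ((w - u) * (u * w - b ^ (q - 1))) := by
    linear_combination w * hroot + (w - u) * hbq
  rw [add_trace_eq_zero_iff hF hK hw, ← mul_eq_zero_iff_left hu0, hfactor,
    mul_eq_zero_iff_left hb, mul_eq_zero, sub_eq_zero, sub_eq_zero]

end QuadraticExtension

section Encoding

variable {q : ℕ} {F K : Type} [Field F] [Field K] [Algebra F K]

/-- The encoding map `(α, β) ↦ c(α,β)`, with coordinates `α + Tr(β ζ^i)` for `i < n`. The code
`C_{(1,q+1,q²)}` is its image for `n = q + 1` and `ζ = γ^(q-1)`. -/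
noncomputable def encode (n : ℕ) (F : Type) {K : Type} [Field F] [Field K] [Algebra F K] (ζ : K) :
    F × K →ₗ[F] (Fin n → F) :=
  LinearMap.pi fun i => LinearMap.coprod LinearMap.id
    (Algebra.trace F K ∘ₗ LinearMap.mulRight F (ζ ^ (i : ℕ)))

theorem encode_apply (n : ℕ) (ζ : K) (a : F) (b : K) (i : Fin n) :
    encode n F ζ (a, b) i = a + Algebra.trace F K (b * ζ ^ (i : ℕ)) := rfl

theorem encode_zero_right (n : ℕ) (ζ : K) (a : F) : encode n F ζ (a, 0) = fun _ => a := by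
  ext i
  simp [encode_apply]

theorem code_eq_image_encode [Fintype F] [Fintype K] (hq : 1 ≤ q) (γ : Kˣ) :
    code q F γ = Finset.univ.image (encode (q + 1) F ((γ : K) ^ (q - 1))) := by
  refine Finset.image_congr fun p _ => funext fun i => ?_
  have hexp : (γ : K) ^ (((q : ℤ) - 1) * ((i : ℕ) : ℤ)) = ((γ : K) ^ (q - 1)) ^ (i : ℕ) := by
    rw [← Nat.cast_pred hq, zpow_mul, zpow_natCast, zpow_natCast]
  simp only [cw, hexp]
  rfl

variable [Fintype F] [Fintype K] {ζ : K}

theorem exists_forall_encode_eq_zero_iff (hF : Fintype.card F = q) (hK : Fintype.card K = q ^ 2)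
    (hζ : IsPrimitiveRoot ζ (q + 1)) {a : F} {b : K} (hb : b ≠ 0) {i : Fin (q + 1)}
    (hi : encode (q + 1) F ζ (a, b) i = 0) :
    ∃ j : Fin (q + 1), ζ ^ (i : ℕ) * ζ ^ (j : ℕ) = b ^ (q - 1) ∧
      ∀ k, encode (q + 1) F ζ (a, b) k = 0 ↔ k = i ∨ k = j := by
  have hunit (k : ℕ) : (ζ ^ k) ^ (q + 1) = 1 := by rw [pow_right_comm, hζ.pow_eq_one, one_pow]
  have hi0 : ζ ^ (i : ℕ) ≠ 0 := pow_ne_zero _ (hζ.ne_zero q.succ_ne_zero)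
  have hpartner : (b ^ (q - 1) / ζ ^ (i : ℕ)) ^ (q + 1) = 1 := by
    rw [div_pow, hunit, div_one, ← pow_mul, sub_one_mul_add_one_eq_card_sub_one hK,
      FiniteField.pow_card_sub_one_eq_one b hb]
  obtain ⟨j, hjlt, hj⟩ := hζ.eq_pow_of_pow_eq_one hpartner
  have hij : ζ ^ (i : ℕ) * ζ ^ j = b ^ (q - 1) := by rw [hj, mul_div_cancel₀ _ hi0]
  refine ⟨⟨j, hjlt⟩, hij, fun k => ?_⟩
  rw [encode_apply] at hi ⊢
  rw [add_trace_eq_zero_iff_of_root hF hK hb (hunit i) (hunit k) hi, ← hij, mul_right_inj' hi0]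
  exact or_congr (pow_fin_injective hζ).eq_iff ((pow_fin_injective hζ).eq_iff (b := ⟨j, hjlt⟩))

theorem hwt_encode_of_apply_eq_zero (hF : Fintype.card F = q) (hK : Fintype.card K = q ^ 2)
    (hζ : IsPrimitiveRoot ζ (q + 1)) {a : F} {b : K} (hb : b ≠ 0) {i : Fin (q + 1)}
    (hi : encode (q + 1) F ζ (a, b) i = 0) :
    hwt (encode (q + 1) F ζ (a, b)) = if b ^ (q - 1) = (ζ ^ (i : ℕ)) ^ 2 then q else q - 1 := by
  obtain ⟨j, hij, hzeros⟩ := exists_forall_encode_eq_zero_iff hF hK hζ hb hi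
  have hoccr : occr 0 (encode (q + 1) F ζ (a, b)) = ({i, j} : Finset (Fin (q + 1))).card := by
    rw [occr]
    congr 1
    ext k
    simp [hzeros]
  have hdouble : b ^ (q - 1) = (ζ ^ (i : ℕ)) ^ 2 ↔ i = j := by
    have hi0 : ζ ^ (i : ℕ) ≠ 0 := pow_ne_zero _ (hζ.ne_zero q.succ_ne_zero)
    rw [← hij, sq, mul_right_inj' hi0, eq_comm]
    exact (pow_fin_injective hζ).eq_iff
  have hsum := occr_zero_add_hwt (encode (q + 1) F ζ (a, b))
  rw [hoccr] at hsum
  simp only [hdouble]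
  split_ifs with h
  · rw [h, Finset.pair_eq_singleton, Finset.card_singleton] at hsum
    omega
  · rw [Finset.card_pair h] at hsum
    omega

theorem hwt_encode_eq_or_of_ne_zero (hF : Fintype.card F = q) (hK : Fintype.card K = q ^ 2)
    (hζ : IsPrimitiveRoot ζ (q + 1)) {p : F × K} (hp : p ≠ 0) :
    hwt (encode (q + 1) F ζ p) = q - 1 ∨ hwt (encode (q + 1) F ζ p) = q ∨
      hwt (encode (q + 1) F ζ p) = q + 1 := by
  obtain ⟨a, b⟩ := p
  by_cases hzero : ∃ i, encode (q + 1) F ζ (a, b) i = 0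
  · obtain ⟨i, hi⟩ := hzero
    have hb : b ≠ 0 := by
      rintro rfl
      rw [encode_zero_right] at hi
      exact hp (Prod.ext hi rfl)
    rw [hwt_encode_of_apply_eq_zero hF hK hζ hb hi]
    split_ifs <;> simp
  · push Not at hzero
    exact .inr (.inr (hwt_eq_of_forall_ne_zero hzero))

theorem encode_injective (hF : Fintype.card F = q) (hK : Fintype.card K = q ^ 2)
    (hζ : IsPrimitiveRoot ζ (q + 1)) : Function.Injective (encode (q + 1) F ζ) := by
  refine (injective_iff_map_eq_zero _).2 fun p hp => ?_
  by_contra hp0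
  have hweight := hwt_encode_eq_or_of_ne_zero hF hK hζ hp0
  have hzero : hwt (encode (q + 1) F ζ p) = 0 := by simp [hp, hwt]
  have hq : 1 < q := hF ▸ Fintype.one_lt_card
  omega

theorem hwt_encode_eq_iff_of_apply_eq_zero (hF : Fintype.card F = q)
    (hK : Fintype.card K = q ^ 2) (hζ : IsPrimitiveRoot ζ (q + 1)) {a : F} {b : K}
    {i : Fin (q + 1)} (hi : encode (q + 1) F ζ (a, b) i = 0) :
    hwt (encode (q + 1) F ζ (a, b)) = q ↔ b ^ (q - 1) = (ζ ^ (i : ℕ)) ^ 2 := by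
  have hq : 1 < q := hF ▸ Fintype.one_lt_card
  rcases eq_or_ne b 0 with rfl | hb
  · have hζ0 : ζ ≠ 0 := hζ.ne_zero q.succ_ne_zero
    rw [encode_zero_right] at hi
    have hweight : hwt (encode (q + 1) F ζ (a, 0)) = 0 := by
      simp [encode_zero_right, hi, hwt]
    have hpow : (0 : K) ^ (q - 1) ≠ (ζ ^ (i : ℕ)) ^ 2 := by
      rw [zero_pow (by omega)]
      exact (pow_ne_zero _ (pow_ne_zero _ hζ0)).symm
    exact iff_of_false (by omega) hpow
  · rw [hwt_encode_of_apply_eq_zero hF hK hζ hb hi]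
    split_ifs with h
    · exact iff_of_true rfl h
    · exact iff_of_false (by omega) h

theorem exists_hwt_encode_eq_sub_one (hF : Fintype.card F = q) (hK : Fintype.card K = q ^ 2)
    (hζ : IsPrimitiveRoot ζ (q + 1)) : ∃ p, hwt (encode (q + 1) F ζ p) = q - 1 := by
  have hq : 1 < q := hF ▸ Fintype.one_lt_card
  have hroots := card_nthRootsFinset_of_mul_eq_card_sub_one
    (sub_one_mul_add_one_eq_card_sub_one hK) hζ.pow_eq_one
  obtain ⟨b, hb⟩ := Finset.card_pos.1 (hroots ▸ Nat.sub_pos_of_lt hq)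
  have hb0 : b ≠ 0 := Polynomial.ne_zero_of_mem_nthRootsFinset (hζ.ne_zero q.succ_ne_zero) hb
  rw [Polynomial.mem_nthRootsFinset (Nat.sub_pos_of_lt hq)] at hb
  have hzero : encode (q + 1) F ζ (-Algebra.trace F K b, b) 0 = 0 := by simp [encode_apply]
  have hdistinct : b ^ (q - 1) ≠ (ζ ^ ((0 : Fin (q + 1)) : ℕ)) ^ 2 := by
    simpa [hb] using hζ.ne_one (by omega)
  exact ⟨_, (hwt_encode_of_apply_eq_zero hF hK hζ hb0 hzero).trans (if_neg hdistinct)⟩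

theorem card_filter_hwt_encode_eq_and_apply_eq_zero (hF : Fintype.card F = q)
    (hK : Fintype.card K = q ^ 2) (hζ : IsPrimitiveRoot ζ (q + 1)) (i : Fin (q + 1)) :
    (Finset.univ.filter fun p : F × K =>
      hwt (encode (q + 1) F ζ p) = q ∧ encode (q + 1) F ζ p i = 0).card = q - 1 := by
  have hpos : 0 < q - 1 := Nat.sub_pos_of_lt (hF ▸ Fintype.one_lt_card)
  have hunit : ((ζ ^ (i : ℕ)) ^ 2) ^ (q + 1) = 1 := by
    rw [pow_right_comm, pow_right_comm ζ, hζ.pow_eq_one, one_pow, one_pow]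
  rw [← card_nthRootsFinset_of_mul_eq_card_sub_one (sub_one_mul_add_one_eq_card_sub_one hK) hunit]
  refine Finset.card_nbij' Prod.snd (fun b => (-Algebra.trace F K (b * ζ ^ (i : ℕ)), b)) ?_ ?_ ?_ ?_
  · rintro ⟨a, b⟩ hp
    obtain ⟨hweight, hi⟩ := (Finset.mem_filter.1 hp).2
    exact (Polynomial.mem_nthRootsFinset hpos _).2
      ((hwt_encode_eq_iff_of_apply_eq_zero hF hK hζ hi).1 hweight)
  · intro b hb
    have hi : encode (q + 1) F ζ (-Algebra.trace F K (b * ζ ^ (i : ℕ)), b) i = 0 :=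
      neg_add_cancel _
    have hdouble := (Polynomial.mem_nthRootsFinset hpos _).1 hb
    exact Finset.mem_filter.2 ⟨Finset.mem_univ _,
      (hwt_encode_eq_iff_of_apply_eq_zero hF hK hζ hi).2 hdouble, hi⟩
  · rintro ⟨a, b⟩ hp
    have hi := (Finset.mem_filter.1 hp).2.2
    exact Prod.ext (eq_neg_of_add_eq_zero_left hi).symm rfl
  · exact fun b _ => rfl

theorem card_filter_hwt_encode_eq (hF : Fintype.card F = q) (hK : Fintype.card K = q ^ 2)
    (hζ : IsPrimitiveRoot ζ (q + 1)) :
    (Finset.univ.filter fun p : F × K => hwt (encode (q + 1) F ζ p) = q).card = q ^ 2 - 1 := by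
  suffices hcount : (Finset.univ.filter fun p : F × K => hwt (encode (q + 1) F ζ p) = q).card * 1 =
      (Finset.univ : Finset (Fin (q + 1))).card * (q - 1) by
    rw [← mul_one (Finset.card _), hcount, Finset.card_univ, Fintype.card_fin, ← Nat.sq_sub_sq,
      one_pow]
  refine Finset.card_mul_eq_card_mul (fun p i => encode (q + 1) F ζ p i = 0)
    (fun p hp => ?_) (fun i _ => ?_)
  · have hsum := occr_zero_add_hwt (encode (q + 1) F ζ p)
    rw [(Finset.mem_filter.1 hp).2, add_comm] at hsum
    exact Nat.add_left_cancel hsum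
  · rw [Finset.bipartiteBelow, Finset.filter_filter]
    exact card_filter_hwt_encode_eq_and_apply_eq_zero hF hK hζ i

end Encoding

/-- `C_{(1,q+1,q²)}` has exactly `q³` codewords, every nonzero codeword has Hamming
weight `q−1`, `q` or `q+1`, each of these weights occurs, and exactly `q² − 1`
codewords have Hamming weight `q`. -/
theorem code_three_weights
    (q : ℕ) (F K : Type) [Field F] [Fintype F] [Field K] [Fintype K] [Algebra F K]
    (hF : Fintype.card F = q) (hK : Fintype.card K = q ^ 2)
    (γ : Kˣ) (hγ : ∀ x : Kˣ, x ∈ Subgroup.zpowers γ)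
    (htr : ∀ x : K, algebraMap F K (Algebra.trace F K x) = x + x ^ q) :
    (code q F γ).card = q ^ 3 ∧
    (∀ v ∈ code q F γ, v ≠ 0 → hwt v = q - 1 ∨ hwt v = q ∨ hwt v = q + 1) ∧
    (∃ v ∈ code q F γ, hwt v = q - 1) ∧
    (∃ v ∈ code q F γ, hwt v = q) ∧
    (∃ v ∈ code q F γ, hwt v = q + 1) ∧
    (Finset.filter (fun v => hwt v = q) (code q F γ)).card = q ^ 2 - 1 := by
  have hq : 1 < q := hF ▸ Fintype.one_lt_card
  have hζ : IsPrimitiveRoot ((γ : K) ^ (q - 1)) (q + 1) :=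
    isPrimitiveRoot_generator_pow_s10 (sub_one_mul_add_one_eq_card_sub_one hK) hγ
  have hinj := encode_injective hF hK hζ
  have hmem (p : F × K) := Finset.mem_image_of_mem (encode (q + 1) F ((γ : K) ^ (q - 1)))
    (Finset.mem_univ p)
  rw [code_eq_image_encode hq.le]
  have hcard : (Finset.filter (fun v => hwt v = q)
      (Finset.univ.image (encode (q + 1) F ((γ : K) ^ (q - 1))))).card = q ^ 2 - 1 := by
    rw [Finset.filter_image, Finset.card_image_of_injective _ hinj,
      card_filter_hwt_encode_eq hF hK hζ]
  have hpos : 0 < q ^ 2 - 1 := Nat.sub_pos_of_lt (Nat.one_lt_pow two_ne_zero hq)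
  refine ⟨?_, ?_, ?_, Finset.filter_nonempty_iff.1 (Finset.card_pos.1 (hcard ▸ hpos)),
    ⟨_, hmem (1, 0), ?_⟩, hcard⟩
  · rw [Finset.card_image_of_injective _ hinj, Finset.card_univ, Fintype.card_prod, hF, hK,
      ← pow_succ']
  · simp only [Finset.forall_mem_image]
    exact fun p _ hp => hwt_encode_eq_or_of_ne_zero hF hK hζ (mt (fun h => h ▸ map_zero _) hp)
  · obtain ⟨p, hp⟩ := exists_hwt_encode_eq_sub_one hF hK hζ
    exact ⟨_, hmem p, hp⟩
  · exact hwt_eq_of_forall_ne_zero fun i => by simp [encode_zero_right]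
end

section
/- Suppose q ≠ 2. Then the dual code C_{(1,q+1,q^2)}^⊥ has exactly q^{q−2} codewords and its minimum Hamming distance is 4; that is, every nonzero codeword of C_{(1,q+1,q^2)}^⊥ has Hamming weight at least 4, and some codeword has Hamming weight exactly 4. -/
open scoped Classical

/-- The dual code `C_{(1,q+1,q²)}^⊥ = {v ∈ F_q^{q+1} : ∑ i, v i · c i = 0 for all
`c ∈ C_{(1,q+1,q²)}`}`. -/
noncomputable def dualCode (q : ℕ) (F : Type) {K : Type} [Field F] [Fintype F] [Field K]
    [Fintype K] [Algebra F K] (γ : Kˣ) : Finset (Fin (q + 1) → F) :=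
  Finset.filter (fun v => ∀ c ∈ code q F γ, ∑ i, v i * c i = 0) Finset.univ

/-!
The dual code is the kernel of the parity-check map `v ↦ (∑ vᵢ, ∑ vᵢ xᵢ)` into the 3-dimensional
`F`-space `F × K`, where `xᵢ = γ^((q-1)i)` runs through the elements with `xᵢ^(q+1) = 1`. Applying
the Frobenius `t ↦ t^q`, which sends `xᵢ` to `xᵢ⁻¹`, to `∑ vᵢ xᵢ = 0` gives the third relation
`∑ vᵢ xᵢ⁻¹ = 0`. So `(vᵢ xᵢ⁻¹)` is orthogonal to `(xᵢ^k)` for `k = 0, 1, 2`, and a Vandermonde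
determinant excludes the weights `1, 2, 3`.

The kernel has dimension at least `(q + 1) - 3` by rank-nullity; the Singleton bound turns this into
an equality and excludes minimum distance `5` or more.
-/

open Function LinearMap Module

section SingletonBound

variable {ι R : Type*} [Fintype ι]

theorem finrank_add_le_card_of_forall_lt_hammingNorm [Ring R] [StrongRankCondition R]
    [DecidableEq R] (C : Submodule R (ι → R)) {d : ℕ} (hd : d ≤ Fintype.card ι)
    (hC : ∀ v ∈ C, v ≠ 0 → d < hammingNorm v) : finrank R C + d ≤ Fintype.card ι := by
  obtain ⟨s, -, hs⟩ := Finset.exists_subset_card_eq (s := (Finset.univ : Finset ι)) hd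
  let puncture : C →ₗ[R] ((sᶜ : Finset ι) → R) := (funLeft R R Subtype.val).domRestrict C
  have puncture_injective : Injective puncture := by
    refine (injective_iff_map_eq_zero puncture).2 fun v hv => ?_
    by_contra hv0
    have support_subset : Finset.univ.filter (fun i => v.1 i ≠ 0) ⊆ s := fun i hi => by
      by_contra his
      exact (Finset.mem_filter.1 hi).2 (congrFun hv ⟨i, Finset.mem_compl.2 his⟩)
    have weight_le : hammingNorm v.1 ≤ d := hs ▸ Finset.card_le_card support_subset
    exact (hC v v.2 (by simpa using hv0)).not_ge weight_le
  have finrank_le := finrank_le_finrank_of_injective puncture_injective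
  rw [finrank_fintype_fun_eq_card, Fintype.card_coe, Finset.card_compl, hs] at finrank_le
  omega

variable [DivisionRing R] {V : Type*} [AddCommGroup V] [Module R V] [FiniteDimensional R V]

theorem card_le_finrank_ker_add_finrank (f : (ι → R) →ₗ[R] V) :
    Fintype.card ι ≤ finrank R (ker f) + finrank R V := by
  have rank_nullity := finrank_range_add_finrank_ker f
  rw [finrank_fintype_fun_eq_card] at rank_nullity
  have := (range f).finrank_le
  omega

theorem finrank_ker_add_eq_card_of_forall_lt_hammingNorm [DecidableEq R] {f : (ι → R) →ₗ[R] V}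
    {d : ℕ} (hV : finrank R V = d) (hd : d ≤ Fintype.card ι)
    (hf : ∀ v ∈ ker f, v ≠ 0 → d < hammingNorm v) :
    finrank R (ker f) + d = Fintype.card ι :=
  (finrank_add_le_card_of_forall_lt_hammingNorm _ hd hf).antisymm
    (hV ▸ card_le_finrank_ker_add_finrank f)

theorem exists_mem_ker_ne_zero_hammingNorm_le [DecidableEq R] (f : (ι → R) →ₗ[R] V)
    (hV : finrank R V < Fintype.card ι) :
    ∃ v ∈ ker f, v ≠ 0 ∧ hammingNorm v ≤ finrank R V + 1 := by
  by_contra! h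
  have := finrank_add_le_card_of_forall_lt_hammingNorm _ hV h
  have := card_le_finrank_ker_add_finrank f
  omega

end SingletonBound

theorem lt_hammingNorm_of_forall_sum_mul_pow_eq_zero {ι R : Type*} [Fintype ι] [CommRing R]
    [IsDomain R] [DecidableEq R] {x b : ι → R} {d : ℕ} (hx : Injective x) (hb : b ≠ 0)
    (h : ∀ k < d, ∑ i, b i * x i ^ k = 0) : d < hammingNorm b := by
  by_contra! hle
  let s : Finset ι := Finset.univ.filter (b · ≠ 0)
  have sum_support (k : Fin s.card) : ∑ i : s, b i * x i ^ (k : ℕ) = 0 := by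
    rw [← h k (k.2.trans_le hle), Finset.sum_coe_sort s fun i => b i * x i ^ (k : ℕ)]
    exact Finset.sum_filter_of_ne fun i _ hi => left_ne_zero_of_mul hi
  have restrict_eq_zero : (fun j => b (s.equivFin.symm j)) = 0 :=
    Matrix.eq_zero_of_forall_pow_sum_mul_pow_eq_zero
      (hx.comp (Subtype.val_injective.comp s.equivFin.symm.injective)) fun k =>
      (s.equivFin.symm.sum_comp fun i => b i * x i ^ (k : ℕ)).trans (sum_support k)
  obtain ⟨i, hi⟩ := Function.ne_iff.1 hb
  have his : i ∈ s := by simpa [s] using hi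
  exact hi (by simpa using congrFun restrict_eq_zero (s.equivFin ⟨i, his⟩))

section ParityCheck

variable {ι : Type*} [Fintype ι]

/-- The parity-check map `v ↦ (∑ vᵢ, ∑ vᵢ xᵢ)` whose matrix has the columns `(1, xᵢ)`. For `xᵢ`
in a finite separable extension of `F`, its kernel is the dual of the code of all vectors
`(a + Tr(b xᵢ))ᵢ`. -/
def parityCheck (F : Type*) {V : Type*} [Semiring F] [AddCommMonoid V] [Module F V] (x : ι → V) :
    (ι → F) →ₗ[F] F × V :=
  Fintype.linearCombination F fun i => (1, x i)

theorem mem_ker_parityCheck {F V : Type*} [Semiring F] [AddCommMonoid V] [Module F V] {x : ι → V}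
    {v : ι → F} :
    v ∈ ker (parityCheck F x) ↔ ∑ i, v i = 0 ∧ ∑ i, v i • x i = 0 := by
  simp [parityCheck, Fintype.linearCombination_apply, Prod.ext_iff, Prod.fst_sum, Prod.snd_sum]

variable {F K : Type*} [Field F]

theorem three_lt_hammingNorm_of_mem_ker_parityCheck [DecidableEq F] [CommRing K] [IsDomain K]
    [Algebra F K] (σ : K →ₐ[F] K) {x : ι → K} (hx : Injective x) (hσ : ∀ i, σ (x i) * x i = 1)
    {v : ι → F} (hv : v ∈ ker (parityCheck F x)) (hv0 : v ≠ 0) : 3 < hammingNorm v := by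
  obtain ⟨sum_eq_zero, sum_smul_eq_zero⟩ := mem_ker_parityCheck.1 hv
  let b : ι → K := fun i => v i • σ (x i)
  have smul_injective (i : ι) : Injective fun a : F => a • σ (x i) :=
    smul_left_injective F (left_ne_zero_of_mul_eq_one (hσ i))
  have hammingNorm_b : hammingNorm b = hammingNorm v :=
    hammingNorm_comp (fun i a => a • σ (x i)) smul_injective fun i => zero_smul F _
  have b_ne_zero : b ≠ 0 := by
    rwa [← hammingNorm_ne_zero_iff, hammingNorm_b, hammingNorm_ne_zero_iff]
  have sum_b : ∑ i, b i = 0 := by simpa [b] using congrArg σ sum_smul_eq_zero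
  have b_mul (i : ι) : b i * x i = algebraMap F K (v i) := by
    rw [smul_mul_assoc, hσ, Algebra.algebraMap_eq_smul_one]
  rw [← hammingNorm_b]
  refine lt_hammingNorm_of_forall_sum_mul_pow_eq_zero hx b_ne_zero fun k hk => ?_
  interval_cases k
  · simpa using sum_b
  · simpa [b_mul] using congrArg (algebraMap F K) sum_eq_zero
  · simpa [pow_two, ← mul_assoc, b_mul, ← Algebra.smul_def] using sum_smul_eq_zero

theorem mem_ker_parityCheck_iff_forall_trace [Field K] [Algebra F K] [FiniteDimensional F K]
    [Algebra.IsSeparable F K] {x : ι → K} {v : ι → F} :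
    v ∈ ker (parityCheck F x) ↔
      ∀ (a : F) (b : K), ∑ i, v i * (a + Algebra.trace F K (b * x i)) = 0 := by
  have sum_eq (a : F) (b : K) : ∑ i, v i * (a + Algebra.trace F K (b * x i)) =
      a * ∑ i, v i + Algebra.trace F K (b * ∑ i, v i • x i) := by
    simp only [mul_add, Finset.sum_add_distrib, ← Finset.sum_mul, mul_comm a,
      Finset.mul_sum (a := b), map_sum, mul_smul_comm, map_smul, smul_eq_mul]
  simp only [mem_ker_parityCheck, sum_eq]
  refine ⟨fun ⟨h₁, h₂⟩ a b => by simp [h₁, h₂], fun h => ⟨by simpa using h 1 0, ?_⟩⟩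
  exact (traceForm_nondegenerate F K).2 _ fun b => by
    simpa only [zero_mul, zero_add, Algebra.traceForm_apply] using h 0 b

end ParityCheck

theorem finrank_eq_of_card_eq_pow {F V : Type*} [Field F] [Fintype F] [AddCommGroup V]
    [Module F V] [Fintype V] {n : ℕ} (h : Fintype.card V = Fintype.card F ^ n) :
    finrank F V = n :=
  Nat.pow_right_injective Fintype.one_lt_card (card_eq_pow_finrank.symm.trans h)

theorem isPrimitiveRoot_zpow_sub_one_s12 {K : Type*} [Field K] [Fintype K] {q : ℕ}
    (hK : Fintype.card K = q ^ 2) {γ : Kˣ} (hγ : ∀ x : Kˣ, x ∈ Subgroup.zpowers γ) :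
    IsPrimitiveRoot ((γ : K) ^ ((q : ℤ) - 1)) (q + 1) := by
  have q_ne_zero : q ≠ 0 := ne_zero_pow two_ne_zero (hK ▸ Fintype.card_ne_zero)
  have orderOf_γ : orderOf γ = (q - 1) * (q + 1) := by
    rw [orderOf_eq_card_of_forall_mem_zpowers hγ, Nat.card_eq_fintype_card, Fintype.card_units,
      hK, mul_comm]
    exact Nat.sq_sub_sq q 1
  rw [← Nat.cast_pred (Nat.pos_of_ne_zero q_ne_zero), zpow_natCast]
  exact (IsPrimitiveRoot.coe_units_iff.2 (IsPrimitiveRoot.orderOf γ)).pow (orderOf_pos γ) orderOf_γ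

theorem three_lt_hammingNorm_of_isPrimitiveRoot {F K : Type*} [Field F] [Fintype F]
    [DecidableEq F] [CommRing K] [IsDomain K] [Algebra F K] {ζ : K}
    (hζ : IsPrimitiveRoot ζ (Fintype.card F + 1)) {v : Fin (Fintype.card F + 1) → F}
    (hv : v ∈ ker (parityCheck F fun i : Fin _ => ζ ^ (i : ℕ))) (hv0 : v ≠ 0) :
    3 < hammingNorm v := by
  refine three_lt_hammingNorm_of_mem_ker_parityCheck (FiniteField.frobeniusAlgHom F K)
    (fun i j hij => Fin.ext (hζ.pow_inj i.2 j.2 hij)) (fun i => ?_) hv hv0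
  rw [FiniteField.coe_frobeniusAlgHom, ← pow_succ, pow_right_comm, hζ.pow_eq_one, one_pow]

theorem hwt_eq_hammingNorm {n : ℕ} {F : Type} [Zero F] [DecidableEq F] (v : Fin n → F) :
    hwt v = hammingNorm v := by
  unfold hwt hammingNorm
  congr

theorem mem_dualCode_iff {q : ℕ} {F K : Type} [Field F] [Fintype F] [Field K] [Fintype K]
    [Algebra F K] {γ : Kˣ} {v : Fin (q + 1) → F} :
    v ∈ dualCode q F γ ↔
      v ∈ ker (parityCheck F fun i : Fin (q + 1) => ((γ : K) ^ ((q : ℤ) - 1)) ^ (i : ℕ)) := by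
  rw [mem_ker_parityCheck_iff_forall_trace]
  simp [dualCode, code, cw, zpow_mul, forall_comm (α := Fin (q + 1) → F)]

theorem card_dualCode {q : ℕ} {F K : Type} [Field F] [Fintype F] [Field K] [Fintype K]
    [Algebra F K] {γ : Kˣ} :
    (dualCode q F γ).card = Fintype.card F ^ finrank F
      (ker (parityCheck F fun i : Fin (q + 1) => ((γ : K) ^ ((q : ℤ) - 1)) ^ (i : ℕ))) := by
  rw [← Nat.card_eq_fintype_card, ← natCard_eq_pow_finrank]
  exact (Nat.subtype_card _ fun _ => mem_dualCode_iff).symm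

/-- For `q ≠ 2`, the dual code `C_{(1,q+1,q²)}^⊥` has exactly `q^{q−2}` codewords and
its minimum Hamming distance is `4`. -/
theorem dual_code_min_distance_four
    (q : ℕ) (F K : Type) [Field F] [Fintype F] [Field K] [Fintype K] [Algebra F K]
    (hF : Fintype.card F = q) (hK : Fintype.card K = q ^ 2)
    (γ : Kˣ) (hγ : ∀ x : Kˣ, x ∈ Subgroup.zpowers γ)
    (htr : ∀ x : K, algebraMap F K (Algebra.trace F K x) = x + x ^ q)
    (hq2 : q ≠ 2) :
    (dualCode q F γ).card = q ^ (q - 2) ∧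
    (∀ v ∈ dualCode q F γ, v ≠ 0 → 4 ≤ hwt v) ∧
    (∃ v ∈ dualCode q F γ, hwt v = 4) := by
  subst hF
  have one_lt_card : 1 < Fintype.card F := Fintype.one_lt_card
  have finrank_eq_three : finrank F (F × K) = 3 := by
    rw [finrank_prod, finrank_self, finrank_eq_of_card_eq_pow hK]
  have card_index : 3 < Fintype.card (Fin (Fintype.card F + 1)) := by
    rw [Fintype.card_fin]
    omega
  let ζ : K := (γ : K) ^ ((Fintype.card F : ℤ) - 1)
  let H := parityCheck F fun i : Fin (Fintype.card F + 1) => ζ ^ (i : ℕ)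
  have lt_weight : ∀ v ∈ ker H, v ≠ 0 → 3 < hammingNorm v := fun _ =>
    three_lt_hammingNorm_of_isPrimitiveRoot (isPrimitiveRoot_zpow_sub_one_s12 hK hγ)
  simp only [hwt_eq_hammingNorm]
  refine ⟨?_, fun v hv => lt_weight v (mem_dualCode_iff.1 hv), ?_⟩
  · have finrank_ker :=
      finrank_ker_add_eq_card_of_forall_lt_hammingNorm finrank_eq_three card_index.le lt_weight
    rw [Fintype.card_fin] at finrank_ker
    rw [card_dualCode, show finrank F (ker H) = Fintype.card F - 2 by omega]
  · obtain ⟨v, hv, hv0, hle⟩ :=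
      exists_mem_ker_ne_zero_hammingNorm_le H (finrank_eq_three.trans_lt card_index)
    rw [finrank_eq_three] at hle
    exact ⟨v, mem_dualCode_iff.2 hv, hle.antisymm (lt_weight v hv hv0)⟩
end

section
/- Suppose q ≥ 5. Then for every integer j with 4 ≤ j ≤ q+1, the number A_j^⊥ of codewords of Hamming weight j in the dual code C_{(1,q+1,q^2)}^⊥ is given by A_j^⊥ = ((q²−1)·C(q−1, j−2) / (2j(j−1)q²)) · [ 2(q−1)^{j−1} + (−1)^j ( (j−1)q((j−2)q − 2) + 2 ) ], where C(·,·) denotes the binomial coefficient. -/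
open scoped Classical

/-!
Write `ζ = γ ^ (q - 1)`, a primitive `(q + 1)`-th root of unity. By nondegeneracy of the trace form,
the dual code is the space of linear relations between the `q + 1` vectors `(1, ζ ^ i)` of the
three-dimensional space `F × K`. Any three of them are independent: a relation gives `∑ a i = 0` and
`∑ a i * x i = 0`, and the Frobenius, which inverts the `(q + 1)`-th roots of unity, adds
`∑ a i * (x i)⁻¹ = 0`; these form a Vandermonde system in the unknowns `a i * (x i)⁻¹`. Thus the
dual code is MDS: exactly `q ^ (#T - 3)` of its words are supported in a set `T` of coordinates
(with `q ^ 0` when `#T < 3`), and Möbius inversion over the subsets of `T` counts those of support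
exactly `T`.
-/

open Finset Module

section AlternatingSums

-- On the left `k - d` is truncated to `0` for `k < d`; the last sum corrects for this.
theorem pow_mul_sum_alternating_pow_tsub {R : Type*} [CommRing R] (x : R) (d j : ℕ) :
    x ^ d * ∑ k ∈ range (j + 1), (-1) ^ (j - k) * (j.choose k : R) * x ^ (k - d) =
      (x - 1) ^ j + ∑ k ∈ range d, (-1) ^ (j - k) * (j.choose k : R) * (x ^ d - x ^ k) := by
  have pow_mul_pow_tsub (k : ℕ) :
      x ^ d * x ^ (k - d) = x ^ k + if k < d then x ^ d - x ^ k else 0 := by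
    split_ifs with hk
    · simp [Nat.sub_eq_zero_of_le hk.le]
    · rw [← pow_add, Nat.add_sub_cancel' (not_lt.1 hk), add_zero]
  have binomial : (x - 1) ^ j = ∑ k ∈ range (j + 1), (-1) ^ (j - k) * (j.choose k : R) * x ^ k := by
    rw [sub_eq_add_neg, add_pow]
    exact sum_congr rfl fun k _ => by ring
  have correction : ∑ k ∈ range (j + 1),
      (-1) ^ (j - k) * (j.choose k : R) * (if k < d then x ^ d - x ^ k else 0) =
        ∑ k ∈ range d, (-1) ^ (j - k) * (j.choose k : R) * (x ^ d - x ^ k) := by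
    simp only [mul_ite, mul_zero, ← sum_filter]
    refine sum_subset (fun k hk => by simpa using (mem_filter.1 hk).2) fun k hkd hk => ?_
    have hjk : j < k := by
      by_contra! hkj
      exact hk (mem_filter.2 ⟨mem_range.2 (Nat.lt_succ_of_le hkj), mem_range.1 hkd⟩)
    simp [Nat.choose_eq_zero_of_lt hjk]
  rw [binomial, ← correction, ← sum_add_distrib, mul_sum]
  refine sum_congr rfl fun k _ => ?_
  rw [← mul_add, ← pow_mul_pow_tsub]
  ring

theorem card_filter_eq_sum_card_filter_subset {α ι : Type*} [DecidableEq ι] (C : Finset α)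
    (f : α → Finset ι) (T : Finset ι) :
    (#{a ∈ C | f a = T} : ℤ) = ∑ S ∈ T.powerset, (-1) ^ #(T \ S) * (#{a ∈ C | f a ⊆ S} : ℤ) := by
  have indicator_eq (U : Finset ι) :
      (if U = T then 1 else 0 : ℤ) =
        ∑ S ∈ T.powerset, (-1) ^ #(T \ S) * if U ⊆ S then 1 else 0 := by
    simp only [mul_ite, mul_one, mul_zero, ← sum_filter]
    by_cases hU : U ⊆ T
    · have reindex : ∑ S ∈ T.powerset with U ⊆ S, (-1 : ℤ) ^ #(T \ S) =
          ∑ W ∈ (T \ U).powerset, (-1) ^ #W :=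
        sum_nbij' (T \ ·) (T \ ·) (by grind) (by grind) (by grind) (by grind) (by grind)
      rw [reindex, sum_powerset_neg_one_pow_card]
      exact if_congr (by rw [sdiff_eq_empty_iff_subset]; grind) rfl rfl
    · rw [if_neg (by grind), filter_eq_empty_iff.2 (by grind), sum_empty]
  simp only [card_filter, Nat.cast_sum, Nat.cast_ite, Nat.cast_one, Nat.cast_zero, mul_sum,
    indicator_eq]
  exact sum_comm

end AlternatingSums

section GeneralPosition

theorem finrank_map_add_finrank_inf_ker {F V W : Type*} [Field F] [AddCommGroup V] [Module F V]
    [AddCommGroup W] [Module F W] (f : V →ₗ[F] W) (p : Submodule F V) [FiniteDimensional F p] :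
    finrank F (p.map f) + finrank F ↥(p ⊓ f.ker) = finrank F p := by
  rw [← LinearMap.range_domRestrict, ← Submodule.map_comap_subtype,
    Submodule.finrank_map_subtype_eq]
  exact (f.domRestrict p).finrank_range_add_finrank_ker

variable {ι F V : Type*} [Field F] [AddCommGroup V] [Module F V]

variable (F) in
/-- A family of vectors is in linear general position when any `dim V` of its members are linearly
independent, i.e. its members are the columns of a parity check matrix of an MDS code. Quantifying
over subfamilies of at most `dim V` members keeps the notion meaningful for short families. -/
def InLinearGeneralPosition (h : ι → V) : Prop :=
  ∀ s : Finset ι, #s ≤ finrank F V → LinearIndepOn F h s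

theorem InLinearGeneralPosition.finrank_span_image [FiniteDimensional F V] {h : ι → V}
    (hh : InLinearGeneralPosition F h) (T : Finset ι) :
    finrank F (Submodule.span F (h '' T)) = min #T (finrank F V) := by
  have finrank_eq_card (s : Finset ι) (hs : #s ≤ finrank F V) :
      finrank F (Submodule.span F (h '' s)) = #s := by
    rw [Set.image_eq_range]
    exact (finrank_span_eq_card (hh s hs)).trans (Fintype.card_coe s)
  rcases le_total #T (finrank F V) with hT | hT
  · rw [finrank_eq_card T hT, min_eq_left hT]
  · obtain ⟨s, hsT, hs⟩ := exists_subset_card_eq hT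
    rw [min_eq_right hT]
    refine (Submodule.finrank_le _).antisymm ?_
    rw [← hs, ← finrank_eq_card s hs.le]
    exact Submodule.finrank_mono (Submodule.span_mono (Set.image_mono (coe_subset.2 hsT)))

variable [Fintype ι] [Fintype F]

theorem card_relations_support_subset (h : ι → V) (T : Finset ι) :
    #{l : ι →₀ F | Finsupp.linearCombination F h l = 0 ∧ l.support ⊆ T} =
      Fintype.card F ^ (#T - finrank F (Submodule.span F (h '' T))) := by
  let φ := Finsupp.linearCombination F h
  let W : Submodule F (ι →₀ F) := Finsupp.supported F F (T : Set ι)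
  have finrank_supported : finrank F W = #T := by
    rw [(Finsupp.supportedEquivFinsupp (T : Set ι)).finrank_eq]
    simp
  have rank_nullity := finrank_map_add_finrank_inf_ker φ W
  rw [← Finsupp.span_image_eq_map_linearCombination, finrank_supported] at rank_nullity
  rw [← rank_nullity, Nat.add_sub_cancel_left, ← Nat.card_eq_fintype_card,
    ← natCard_eq_pow_finrank (V := ↥(W ⊓ φ.ker))]
  refine (Nat.subtype_card _ fun l => ?_).symm
  rw [mem_filter_univ, ← coe_subset]
  exact and_comm

theorem InLinearGeneralPosition.card_relations_card_support_eq [FiniteDimensional F V] {h : ι → V}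
    (hh : InLinearGeneralPosition F h) (j : ℕ) :
    (#{l : ι →₀ F | Finsupp.linearCombination F h l = 0 ∧ #l.support = j} : ℤ) =
      (Fintype.card ι).choose j * ∑ k ∈ range (j + 1),
        (-1) ^ (j - k) * (j.choose k : ℤ) * (Fintype.card F : ℤ) ^ (k - finrank F V) := by
  let C : Finset (ι →₀ F) := {l | Finsupp.linearCombination F h l = 0}
  have card_subset (S : Finset ι) :
      #{l ∈ C | l.support ⊆ S} = Fintype.card F ^ (#S - finrank F V) := by
    rw [filter_filter, card_relations_support_subset, hh.finrank_span_image]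
    congr 1
    omega
  have card_eq (T : Finset ι) (hT : #T = j) :
      (#{l ∈ C | l.support = T} : ℤ) = ∑ k ∈ range (j + 1),
        (-1) ^ (j - k) * (j.choose k : ℤ) * (Fintype.card F : ℤ) ^ (k - finrank F V) := by
    subst hT
    rw [card_filter_eq_sum_card_filter_subset]
    calc ∑ S ∈ T.powerset, (-1) ^ #(T \ S) * (#{l ∈ C | l.support ⊆ S} : ℤ)
        = ∑ S ∈ T.powerset,
            (-1) ^ (#T - #S) * (Fintype.card F : ℤ) ^ (#S - finrank F V) :=
          sum_congr rfl fun S hS => by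
            rw [card_subset, card_sdiff_of_subset (mem_powerset.1 hS), Nat.cast_pow]
      _ = _ := by
          rw [sum_powerset_apply_card
            fun k => (-1) ^ (#T - k) * (Fintype.card F : ℤ) ^ (k - finrank F V)]
          exact sum_congr rfl fun k _ => by rw [nsmul_eq_mul]; ring
  have card_fiberwise : #{l ∈ C | #l.support = j} =
      ∑ T ∈ powersetCard j univ, #{l ∈ C | l.support = T} := by
    rw [card_eq_sum_card_fiberwise (f := Finsupp.support) (t := powersetCard j univ)
      fun l hl => by simpa using (mem_filter.1 hl).2]
    refine sum_congr rfl fun T hT => ?_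
    rw [filter_filter]
    congr! 2 with l
    exact and_iff_right_of_imp fun hl => hl ▸ (mem_powersetCard.1 hT).2
  rw [← filter_filter, card_fiberwise, Nat.cast_sum,
    sum_congr rfl fun T hT => card_eq T (mem_powersetCard.1 hT).2]
  simp

theorem InLinearGeneralPosition.pow_finrank_mul_card_relations_card_support_eq
    [FiniteDimensional F V] {h : ι → V} (hh : InLinearGeneralPosition F h) (j : ℕ) :
    (Fintype.card F : ℤ) ^ finrank F V *
        #{l : ι →₀ F | Finsupp.linearCombination F h l = 0 ∧ #l.support = j} =
      (Fintype.card ι).choose j * (((Fintype.card F : ℤ) - 1) ^ j +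
        ∑ k ∈ range (finrank F V), (-1) ^ (j - k) * (j.choose k : ℤ) *
          ((Fintype.card F : ℤ) ^ finrank F V - (Fintype.card F : ℤ) ^ k)) := by
  rw [hh.card_relations_card_support_eq, mul_left_comm, pow_mul_sum_alternating_pow_tsub]

end GeneralPosition

section UnitCircle

variable {F K : Type*} [Field F] [Fintype F] [Field K] [Algebra F K]

theorem linearIndependent_one_prod_of_pow_eq_one {n : ℕ} (hn : n ≤ 3) {x : Fin n → K}
    (hx : Function.Injective x) (hx1 : ∀ i, x i ^ (Fintype.card F + 1) = 1) :
    LinearIndependent F fun i => ((1 : F), x i) := by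
  have hx0 (i : Fin n) : x i ≠ 0 := fun h0 => by simpa [h0] using hx1 i
  rw [Fintype.linearIndependent_iff]
  intro a ha
  simp only [Prod.ext_iff, Prod.fst_sum, Prod.snd_sum, Prod.smul_mk, smul_eq_mul, mul_one,
    Prod.fst_zero, Prod.snd_zero] at ha
  obtain ⟨sum_coeff, sum_node⟩ := ha
  have sum_inv_node : ∑ i, a i • (x i)⁻¹ = 0 := by
    have frobenius_sum := congrArg (FiniteField.frobeniusAlgHom F K) sum_node
    simp only [map_sum, map_smul, map_zero, FiniteField.coe_frobeniusAlgHom] at frobenius_sum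
    rw [← frobenius_sum]
    refine sum_congr rfl fun i _ => ?_
    rw [inv_eq_of_mul_eq_one_left (by rw [← pow_succ, hx1])]
  have moments (k : Fin n) : ∑ i, (a i • (x i)⁻¹) * x i ^ (k : ℕ) = 0 := by
    obtain hk | hk | hk : (k : ℕ) = 0 ∨ (k : ℕ) = 1 ∨ (k : ℕ) = 2 := by omega
    · simpa [hk] using sum_inv_node
    · simpa [hk, hx0, Algebra.smul_def] using congrArg (algebraMap F K) sum_coeff
    · simpa [hk, pow_two, hx0] using sum_node
  intro i
  simpa [hx0] using
    congrFun (Matrix.eq_zero_of_forall_pow_sum_mul_pow_eq_zero hx moments) i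

theorem inLinearGeneralPosition_one_prod_of_pow_eq_one {ι : Type*} (hK : finrank F K = 2)
    {x : ι → K} (hx : Function.Injective x) (hx1 : ∀ i, x i ^ (Fintype.card F + 1) = 1) :
    InLinearGeneralPosition F fun i => ((1 : F), x i) := by
  have : FiniteDimensional F K := FiniteDimensional.of_finrank_eq_succ hK
  intro s hs
  rw [finrank_prod, finrank_self, hK] at hs
  exact (linearIndependent_equiv' s.equivFin.symm rfl).1
    (linearIndependent_one_prod_of_pow_eq_one hs
      (hx.comp (Subtype.val_injective.comp s.equivFin.symm.injective)) fun _ => hx1 _)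

end UnitCircle

section DualCode

variable {q : ℕ} {F K : Type} [Field K]

/-- The node `γ ^ ((q - 1) * i)` at which the `i`-th coordinate of `C_{(1,q+1,q²)}` is evaluated.
The exponent is an integer, as in `cw`. -/
noncomputable def codeNode (q : ℕ) (γ : Kˣ) (i : Fin (q + 1)) : K :=
  (γ : K) ^ (((q : ℤ) - 1) * ((i : ℕ) : ℤ))

variable [Fintype K]

theorem exists_isPrimitiveRoot_codeNode_eq_pow (hK : Fintype.card K = q ^ 2) {γ : Kˣ}
    (hγ : ∀ x : Kˣ, x ∈ Subgroup.zpowers γ) :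
    ∃ ζ : K, IsPrimitiveRoot ζ (q + 1) ∧ ∀ i, codeNode q γ i = ζ ^ (i : ℕ) := by
  have hq : 0 < q := Nat.pos_of_ne_zero fun hq => by simp [hq] at hK
  have card_units_eq : Nat.card Kˣ = (q - 1) * (q + 1) := by
    rw [Nat.card_units, Nat.card_eq_fintype_card, hK, mul_comm, ← Nat.sq_sub_sq, one_pow]
  have hγ_root : IsPrimitiveRoot (γ : K) (Nat.card Kˣ) := by
    rw [IsPrimitiveRoot.coe_units_iff, ← orderOf_eq_card_of_forall_mem_zpowers hγ]
    exact IsPrimitiveRoot.orderOf γ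
  refine ⟨(γ : K) ^ (q - 1), hγ_root.pow Nat.card_pos card_units_eq, fun i => ?_⟩
  rw [codeNode, ← Nat.cast_pred hq, zpow_mul, zpow_natCast, zpow_natCast]

theorem codeNode_injective (hK : Fintype.card K = q ^ 2) {γ : Kˣ}
    (hγ : ∀ x : Kˣ, x ∈ Subgroup.zpowers γ) : Function.Injective (codeNode q γ) := by
  obtain ⟨ζ, hζ, codeNode_eq⟩ := exists_isPrimitiveRoot_codeNode_eq_pow hK hγ
  intro i j hij
  rw [codeNode_eq, codeNode_eq] at hij
  exact Fin.ext (hζ.pow_inj i.2 j.2 hij)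

theorem codeNode_pow_eq_one (hK : Fintype.card K = q ^ 2) {γ : Kˣ}
    (hγ : ∀ x : Kˣ, x ∈ Subgroup.zpowers γ) (i : Fin (q + 1)) : codeNode q γ i ^ (q + 1) = 1 := by
  obtain ⟨ζ, hζ, codeNode_eq⟩ := exists_isPrimitiveRoot_codeNode_eq_pow hK hγ
  rw [codeNode_eq, pow_right_comm, hζ.pow_eq_one, one_pow]

variable [Field F] [Fintype F] [Algebra F K]

theorem finrank_eq_two_of_card_eq_sq (hF : Fintype.card F = q) (hK : Fintype.card K = q ^ 2) :
    finrank F K = 2 := by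
  have card_eq := card_eq_pow_finrank (K := F) (V := K)
  rw [hK, ← hF] at card_eq
  exact (Nat.pow_right_injective Fintype.one_lt_card card_eq).symm

theorem mem_dualCode_iff_s14 (γ : Kˣ) (v : Fin (q + 1) → F) :
    v ∈ dualCode q F γ ↔ ∑ i, v i • ((1 : F), codeNode q γ i) = 0 := by
  have pairing_eq (α : F) (β : K) : ∑ i, v i * (α + cw q F γ β i) =
      α * ∑ i, v i + Algebra.traceForm F K β (∑ i, v i • codeNode q γ i) := by
    simp only [cw, codeNode, mul_add, sum_add_distrib, ← sum_mul, mul_comm α, map_sum, map_smul,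
      smul_eq_mul, Algebra.traceForm_apply]
  have mem_iff : v ∈ dualCode q F γ ↔ ∀ (α : F) (β : K),
      α * ∑ i, v i + Algebra.traceForm F K β (∑ i, v i • codeNode q γ i) = 0 := by
    simp_rw [dualCode, mem_filter_univ, code, forall_mem_image, Prod.forall, pairing_eq, mem_univ,
      true_imp_iff]
  simp only [mem_iff, Prod.ext_iff, Prod.fst_sum, Prod.snd_sum, Prod.smul_mk, smul_eq_mul,
    mul_one, Prod.fst_zero, Prod.snd_zero]
  constructor
  · intro h
    exact ⟨by simpa using h 1 0,
      (traceForm_nondegenerate F K).2 _ fun β => by simpa using h 0 β⟩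
  · rintro ⟨sum_eq, node_sum_eq⟩ α β
    simp [sum_eq, node_sum_eq]

theorem card_dualCode_hwt_eq (γ : Kˣ) (j : ℕ) :
    #{v ∈ dualCode q F γ | hwt v = j} =
      #{l : Fin (q + 1) →₀ F |
        Finsupp.linearCombination F (fun i => ((1 : F), codeNode q γ i)) l = 0 ∧
          #l.support = j} := by
  refine card_equiv Finsupp.equivFunOnFinite.symm fun v => ?_
  have support_eq : (Finsupp.equivFunOnFinite.symm v).support = ({i | v i ≠ 0} : Finset _) := by
    ext i
    simp
  rw [mem_filter, mem_filter_univ, mem_dualCode_iff_s14, support_eq,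
    ← Fintype.linearCombination_apply F,
    ← Finsupp.linearCombination_eq_fintype_linearCombination_apply]
  rfl

theorem pow_three_mul_card_dualCode_hwt_eq (hF : Fintype.card F = q) (hK : Fintype.card K = q ^ 2)
    {γ : Kˣ} (hγ : ∀ x : Kˣ, x ∈ Subgroup.zpowers γ) (j : ℕ) :
    (q : ℤ) ^ 3 * #{v ∈ dualCode q F γ | hwt v = j} =
      (q + 1).choose j * (((q : ℤ) - 1) ^ j +
        ∑ k ∈ range 3, (-1) ^ (j - k) * (j.choose k : ℤ) * ((q : ℤ) ^ 3 - (q : ℤ) ^ k)) := by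
  have finrank_K : finrank F K = 2 := finrank_eq_two_of_card_eq_sq hF hK
  have finrank_prod_eq : finrank F (F × K) = 3 := by rw [finrank_prod, finrank_self, finrank_K]
  have general_position : InLinearGeneralPosition F fun i => ((1 : F), codeNode q γ i) :=
    inLinearGeneralPosition_one_prod_of_pow_eq_one finrank_K (codeNode_injective hK hγ)
      (hF ▸ codeNode_pow_eq_one hK hγ)
  have weights := general_position.pow_finrank_mul_card_relations_card_support_eq j
  rw [finrank_prod_eq, hF, Fintype.card_fin] at weights
  rw [card_dualCode_hwt_eq]
  convert weights

end DualCode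

section ClosedForm

theorem choose_mul_mul_sub_one (n : ℕ) {j : ℕ} (hj : 2 ≤ j) :
    (n.choose j : ℚ) * (j * (j - 1)) = n * (n - 1) * (n - 2).choose (j - 2) := by
  have choose_mul_choose_two := congrArg (Nat.cast : ℕ → ℚ) (Nat.choose_mul (n := n) hj)
  push_cast [Nat.cast_choose_two] at choose_mul_choose_two
  linear_combination 2 * choose_mul_choose_two

theorem sum_range_three_alternating_choose (x : ℚ) {j : ℕ} (hj : 2 ≤ j) :
    ∑ k ∈ range 3, (-1) ^ (j - k) * (j.choose k : ℚ) * (x ^ 3 - x ^ k) =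
      (-1) ^ j * (x ^ 3 - 1 - j * (x ^ 3 - x) + j * (j - 1) / 2 * (x ^ 3 - x ^ 2)) := by
  obtain ⟨i, rfl⟩ := Nat.exists_eq_add_of_le' hj
  simp only [sum_range_succ, range_zero, sum_empty, Nat.choose_zero_right, Nat.choose_one_right,
    Nat.cast_choose_two, Nat.add_sub_cancel, Nat.sub_zero, show i + 2 - 1 = i + 1 from rfl,
    pow_succ]
  push_cast
  ring

theorem pow_three_mul_closed_form {q j : ℕ} (hj : 2 ≤ j) :
    (q : ℚ) ^ 3 * (((q : ℚ) ^ 2 - 1) * ((q - 1).choose (j - 2) : ℚ)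
          / (2 * (j : ℚ) * ((j : ℚ) - 1) * (q : ℚ) ^ 2)
        * (2 * ((q : ℚ) - 1) ^ (j - 1)
            + (-1 : ℚ) ^ j * (((j : ℚ) - 1) * q * (((j : ℚ) - 2) * q - 2) + 2))) =
      (q + 1).choose j * (((q : ℚ) - 1) ^ j +
        ∑ k ∈ range 3, (-1) ^ (j - k) * (j.choose k : ℚ) * ((q : ℚ) ^ 3 - (q : ℚ) ^ k)) := by
  have hj0 : (j : ℚ) ≠ 0 := by positivity
  have hj1 : (j : ℚ) - 1 ≠ 0 := sub_ne_zero.2 (by exact_mod_cast (by omega : j ≠ 1))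
  have choose_eq := eq_div_of_mul_eq (mul_ne_zero hj0 hj1) (choose_mul_mul_sub_one (q + 1) hj)
  rw [sum_range_three_alternating_choose _ hj, choose_eq,
    ← pow_sub_one_mul (by omega : j ≠ 0) ((q : ℚ) - 1), show q + 1 - 2 = q - 1 from rfl]
  push_cast
  field_simp
  ring

end ClosedForm

theorem dual_code_weight_distribution_general
    {q : ℕ} {F K : Type} [Field F] [Fintype F] [Field K] [Fintype K] [Algebra F K]
    (hF : Fintype.card F = q) (hK : Fintype.card K = q ^ 2)
    {γ : Kˣ} (hγ : ∀ x : Kˣ, x ∈ Subgroup.zpowers γ) {j : ℕ} (hj : 2 ≤ j) :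
    ((Finset.filter (fun v => hwt v = j) (dualCode q F γ)).card : ℚ)
      = ((q : ℚ) ^ 2 - 1) * ((q - 1).choose (j - 2) : ℚ)
          / (2 * (j : ℚ) * ((j : ℚ) - 1) * (q : ℚ) ^ 2)
        * (2 * ((q : ℚ) - 1) ^ (j - 1)
            + (-1 : ℚ) ^ j * (((j : ℚ) - 1) * q * (((j : ℚ) - 2) * q - 2) + 2)) := by
  have hq : 0 < q := hF ▸ Fintype.card_pos
  have weights := congrArg (Int.cast : ℤ → ℚ) (pow_three_mul_card_dualCode_hwt_eq hF hK hγ j)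
  push_cast at weights
  exact mul_left_cancel₀ (by positivity) (weights.trans (pow_three_mul_closed_form hj).symm)

/-- For `q ≥ 5` and `4 ≤ j ≤ q+1`, the number `A_j^⊥` of codewords of Hamming weight `j`
in the dual code `C_{(1,q+1,q²)}^⊥` is
`((q²−1)·C(q−1,j−2) / (2j(j−1)q²)) · [2(q−1)^{j−1} + (−1)^j((j−1)q((j−2)q−2)+2)]`. -/
theorem dual_code_weight_distribution
    (q : ℕ) (F K : Type) [Field F] [Fintype F] [Field K] [Fintype K] [Algebra F K]
    (hF : Fintype.card F = q) (hK : Fintype.card K = q ^ 2)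
    (γ : Kˣ) (hγ : ∀ x : Kˣ, x ∈ Subgroup.zpowers γ)
    (htr : ∀ x : K, algebraMap F K (Algebra.trace F K x) = x + x ^ q)
    (hq5 : 5 ≤ q) (j : ℕ) (hj4 : 4 ≤ j) (hjq : j ≤ q + 1) :
    ((Finset.filter (fun v => hwt v = j) (dualCode q F γ)).card : ℚ)
      = ((q : ℚ) ^ 2 - 1) * ((q - 1).choose (j - 2) : ℚ)
          / (2 * (j : ℚ) * ((j : ℚ) - 1) * (q : ℚ) ^ 2)
        * (2 * ((q : ℚ) - 1) ^ (j - 1)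
            + (-1 : ℚ) ^ j * (((j : ℚ) - 1) * q * (((j : ℚ) - 2) * q - 2) + 2)) :=
  dual_code_weight_distribution_general hF hK hγ (by omega)
end
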